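/- Let k ≥ 2 divide n, set k_X = ⌊k/2⌋ and k_Y = ⌈k/2⌉, and let H be a k-uniform hypergraph on [n] with m edges and density p = m/binom(n,k) that satisfies properties R_a, R_b, R_c, R_d, R_e, R_f with parameter ε = ε(n), where ε → 0 and ε n^{1/2} p² / log^5 n → ∞. Then H contains a collection of at least (1 − 4ε^{1/3}) m/ν_k pairwise edge-disjoint perfect matchings, where ν_k = n/k. -/

import Mathlib

open Finset Filter

/-- `C` is a perfect matching of the hypergraph `H` on `Fin n` (where `k ∣ n`):
a set of `n/k` pairwise disjoint edges of `H` covering all vertices. -/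
def IsHypPerfectMatching (n k : ℕ) (H C : Finset (Finset (Fin n))) : Prop :=
  C ⊆ H ∧ C.card = n / k ∧ (C : Set (Finset (Fin n))).PairwiseDisjoint id ∧
    C.biUnion id = Finset.univ

open scoped Classical in
/-- The neighbourhood `N_H(S)` of `S` in a `k`-uniform hypergraph `H` on `Fin n`:
the `(k - |S|)`-sets `Y` with `S ∪ Y ∈ H`. -/
def hNbhd (n k : ℕ) (H : Finset (Finset (Fin n))) (S : Finset (Fin n)) :
    Finset (Finset (Fin n)) :=
  Finset.univ.filter fun Y => Y.card = k - S.card ∧ S ∪ Y ∈ H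

/-- The degree `d_H(S) = |N_H(S)|`. -/
def hDeg (n k : ℕ) (H : Finset (Finset (Fin n))) (S : Finset (Fin n)) : ℕ :=
  (hNbhd n k H S).card

/-!
Split `[n]` at random into `ν` blocks of size `κ` and `ν` blocks of size `c`, where `κ + c = k` and
`n = k * ν`. The unions of two blocks that are edges of `H` form a balanced bipartite graph, and its
perfect matchings are perfect matchings of `H`. By a martingale concentration argument its degrees
and codegrees are close to those of a random bipartite graph, so that all its cuts are large. Take
many such partitions such that every edge of `H` occurs in at most `M` of them, and assign each edge
to one of its occurrences at random. The cuts in each partition keep a `1 / M` fraction of their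
edges, and the cut criterion for `r`-factors together with Hall's theorem gives `r` disjoint perfect
matchings in each of the graphs, which have no edges of `H` in common.
-/

namespace HypergraphPacking

section EdgeCount

variable {α β : Type*} [DecidableEq α] [DecidableEq β]

/-- The number `e_G(S, T)` of edges between `S` and `T` in the bipartite graph with edge set
`G ⊆ α × β`. -/
def edgeCount (G : Finset (α × β)) (S : Finset α) (T : Finset β) : ℕ :=
  #{x ∈ G | x.1 ∈ S ∧ x.2 ∈ T}

variable (G : Finset (α × β))

lemma edgeCount_eq_sum_left (S : Finset α) (T : Finset β) :
    edgeCount G S T = ∑ a ∈ S, edgeCount G {a} T := by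
  simp only [edgeCount, card_filter]
  rw [sum_comm]
  refine sum_congr rfl fun x _ ↦ ?_
  by_cases h : x.2 ∈ T <;> simp [h]

lemma edgeCount_eq_sum_right (S : Finset α) (T : Finset β) :
    edgeCount G S T = ∑ b ∈ T, edgeCount G S {b} := by
  simp only [edgeCount, card_filter]
  rw [sum_comm]
  refine sum_congr rfl fun x _ ↦ ?_
  by_cases h : x.1 ∈ S <;> simp [h]

lemma edgeCount_singleton_left (a : α) (T : Finset β) :
    edgeCount G {a} T = #{b ∈ T | (a, b) ∈ G} := by
  refine card_nbij' Prod.snd (a, ·) ?_ ?_ ?_ ?_ <;> simp [Set.MapsTo, Set.LeftInvOn] <;> grind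

lemma edgeCount_singleton_right (S : Finset α) (b : β) :
    edgeCount G S {b} = #{a ∈ S | (a, b) ∈ G} := by
  refine card_nbij' Prod.fst (·, b) ?_ ?_ ?_ ?_ <;> simp [Set.MapsTo, Set.LeftInvOn] <;> grind

lemma edgeCount_union_inter_add_inter_union_le (S S' : Finset α) (T T' : Finset β) :
    edgeCount G (S ∪ S') (T ∩ T') + edgeCount G (S ∩ S') (T ∪ T') ≤
      edgeCount G S T + edgeCount G S' T' := by
  simp only [edgeCount, card_filter, ← sum_add_distrib]
  refine sum_le_sum fun x _ ↦ ?_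
  by_cases x.1 ∈ S <;> by_cases x.1 ∈ S' <;> by_cases x.2 ∈ T <;> by_cases x.2 ∈ T' <;>
    simp [*]

lemma edgeCount_erase {x : α × β} (hx : x ∈ G) (S : Finset α) (T : Finset β) :
    edgeCount G S T = edgeCount (G.erase x) S T + if x.1 ∈ S ∧ x.2 ∈ T then 1 else 0 := by
  simp only [edgeCount, card_filter]
  rw [← sum_erase_add _ _ hx]

end EdgeCount

section Factor

variable {V : Type*} [Fintype V] [DecidableEq V] {r : ℕ} {F G : Finset (V × V)}

/-- The cut condition `e_G(S, T) ≥ r (|S| + |T| - |V|)` for the existence of an `r`-factor in a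
balanced bipartite graph with both sides indexed by `V`, arranged so as to avoid subtraction. -/
def CutCondition (r : ℕ) (G : Finset (V × V)) : Prop :=
  ∀ S T : Finset V, r * (#S + #T) ≤ edgeCount G S T + r * Fintype.card V

/-- A pair `(S, T)` for which the cut condition holds with equality. -/
def IsTightCut (r : ℕ) (G : Finset (V × V)) (S T : Finset V) : Prop :=
  r * (#S + #T) = edgeCount G S T + r * Fintype.card V

/-- A bipartite graph in which every vertex, on either side, has degree `r`. -/
structure IsBiregular (r : ℕ) (G : Finset (V × V)) : Prop where
  left (a : V) : edgeCount G {a} univ = r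
  right (b : V) : edgeCount G univ {b} = r

lemma CutCondition.le_edgeCount_left (hF : CutCondition r F) (a : V) :
    r ≤ edgeCount F {a} univ := by
  simpa [mul_add] using hF {a} univ

lemma CutCondition.le_edgeCount_right (hF : CutCondition r F) (b : V) :
    r ≤ edgeCount F univ {b} := by
  have h := hF univ {b}
  simp only [card_univ, card_singleton, mul_add, mul_one] at h
  lia

lemma IsTightCut.inter_union {S S' T T' : Finset V} (hF : CutCondition r F)
    (h : IsTightCut r F S T) (h' : IsTightCut r F S' T') :
    IsTightCut r F (S ∩ S') (T ∪ T') := by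
  have hsub := edgeCount_union_inter_add_inter_union_le F S S' T T'
  have hcut := hF (S ∪ S') (T ∩ T')
  have hcut' := hF (S ∩ S') (T ∪ T')
  have hS := congrArg (r * ·) (card_union_add_card_inter S S')
  have hT := congrArg (r * ·) (card_union_add_card_inter T T')
  unfold IsTightCut at *
  simp only [mul_add] at *
  lia

lemma exists_isTightCut_of_minimal (hF : Minimal (CutCondition r) F) {x : V × V} (hx : x ∈ F) :
    ∃ S T, x.1 ∈ S ∧ x.2 ∈ T ∧ IsTightCut r F S T := by
  by_contra! hloose
  have herase : CutCondition r (F.erase x) := by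
    intro S T
    have hcut := hF.prop S T
    have hsplit := edgeCount_erase F hx S T
    by_cases hST : x.1 ∈ S ∧ x.2 ∈ T
    · have hlt := lt_of_le_of_ne hcut (hloose S T hST.1 hST.2)
      rw [if_pos hST] at hsplit
      lia
    · rw [if_neg hST] at hsplit
      lia
  exact notMem_erase x F (hF.le_of_le herase (erase_subset x F) hx)

lemma exists_isTightCut_superset_of_minimal (hF : Minimal (CutCondition r) F) (a : V)
    {N : Finset V} (hN : N.Nonempty) (haN : ∀ b ∈ N, (a, b) ∈ F) :
    ∃ S T, a ∈ S ∧ N ⊆ T ∧ IsTightCut r F S T := by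
  induction hN using Finset.Nonempty.cons_induction with
  | singleton b =>
    obtain ⟨S, T, haS, hbT, hST⟩ := exists_isTightCut_of_minimal hF (haN b (by simp))
    exact ⟨S, T, haS, by simpa using hbT, hST⟩
  | cons b N hb _ ih =>
    obtain ⟨S, T, haS, hbT, hST⟩ := exists_isTightCut_of_minimal hF (haN b (by simp))
    obtain ⟨S', T', haS', hNT', hST'⟩ := ih fun c hc ↦ haN c (by simp [hc])
    refine ⟨S ∩ S', T ∪ T', by simp [haS, haS'], ?_, hST.inter_union hF.prop hST'⟩
    rw [cons_eq_insert]
    exact insert_subset (mem_union_left _ hbT) (hNT'.trans subset_union_right)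

lemma edgeCount_left_eq_of_minimal (hF : Minimal (CutCondition r) F) (a : V) :
    edgeCount F {a} univ = r := by
  refine le_antisymm ?_ (hF.prop.le_edgeCount_left a)
  obtain hN | hN := ({b | (a, b) ∈ F} : Finset V).eq_empty_or_nonempty
  · simp [edgeCount_singleton_left, hN]
  obtain ⟨S, T, haS, hNT, hST⟩ :=
    exists_isTightCut_superset_of_minimal hF a hN fun b hb ↦ by simpa using hb
  have hdeg : edgeCount F {a} T = edgeCount F {a} univ := by
    simp only [edgeCount_singleton_left]
    refine congrArg card (Subset.antisymm (filter_subset_filter _ (subset_univ T)) fun b hb ↦ ?_)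
    exact mem_filter.mpr ⟨hNT hb, (mem_filter.mp hb).2⟩
  have hsplit : edgeCount F S T = edgeCount F (S.erase a) T + edgeCount F {a} T := by
    rw [edgeCount_eq_sum_left F S, edgeCount_eq_sum_left F (S.erase a), sum_erase_add _ _ haS]
  have hcut := hF.prop (S.erase a) T
  have hcard := congrArg (r * ·) (card_erase_add_one haS)
  unfold IsTightCut at hST
  simp only [mul_add] at *
  lia

lemma CutCondition.exists_isBiregular_subset (hG : CutCondition r G) :
    ∃ F ⊆ G, IsBiregular r F := by
  obtain ⟨F, hFG, hF⟩ := exists_minimal_le_of_wellFoundedLT (CutCondition r) G hG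
  have hleft := edgeCount_left_eq_of_minimal hF
  have hsum : ∑ _b : V, r = ∑ b, edgeCount F univ {b} := by
    rw [← edgeCount_eq_sum_right, edgeCount_eq_sum_left]
    exact sum_congr rfl fun a _ ↦ (hleft a).symm
  have hright := (sum_eq_sum_iff_of_le fun b _ ↦ hF.prop.le_edgeCount_right b).mp hsum
  exact ⟨F, hFG, hleft, fun b ↦ (hright b (mem_univ b)).symm⟩

lemma IsBiregular.exists_perm (hF : IsBiregular (r + 1) F) :
    ∃ π : Equiv.Perm V, ∀ a, (a, π a) ∈ F := by
  have hall (S : Finset V) : #S ≤ #(S.biUnion fun a ↦ {b | (a, b) ∈ F}) := by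
    set T := S.biUnion fun a ↦ ({b | (a, b) ∈ F} : Finset V)
    have hS : edgeCount F S univ = #S * (r + 1) := by
      rw [edgeCount_eq_sum_left, sum_congr rfl fun a _ ↦ hF.left a, sum_const, smul_eq_mul]
    have hT' : edgeCount F univ T = #T * (r + 1) := by
      rw [edgeCount_eq_sum_right, sum_congr rfl fun b _ ↦ hF.right b, sum_const, smul_eq_mul]
    have hle : edgeCount F S univ ≤ edgeCount F univ T := by
      refine card_le_card fun x hx ↦ ?_
      simp only [mem_filter, mem_univ, and_true, true_and] at hx ⊢
      exact ⟨hx.1, mem_biUnion.mpr ⟨x.1, hx.2, by simpa using hx.1⟩⟩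
    rw [hS, hT'] at hle
    exact Nat.le_of_mul_le_mul_right hle r.succ_pos
  obtain ⟨f, hf, hfF⟩ := (all_card_le_biUnion_card_iff_exists_injective _).mp hall
  exact ⟨Equiv.ofBijective f (Finite.injective_iff_bijective.mp hf), fun a ↦ by simpa using hfF a⟩

lemma IsBiregular.filter_ne_perm (hF : IsBiregular (r + 1) F) {π : Equiv.Perm V}
    (hπ : ∀ a, (a, π a) ∈ F) : IsBiregular r {x ∈ F | x.2 ≠ π x.1} where
  left a := by
    have h := hF.left a
    rw [edgeCount_singleton_left] at h ⊢
    have herase : ({b ∈ univ | (a, b) ∈ ({x ∈ F | x.2 ≠ π x.1} : Finset (V × V))} : Finset V) =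
        ({b ∈ univ | (a, b) ∈ F} : Finset V).erase (π a) := by
      ext b
      simp [and_comm]
    rw [herase, card_erase_of_mem (by simpa using hπ a), h, Nat.add_sub_cancel]
  right b := by
    have h := hF.right b
    rw [edgeCount_singleton_right] at h ⊢
    have hb : (π.symm b, b) ∈ F := by simpa using hπ (π.symm b)
    have herase : ({a ∈ univ | (a, b) ∈ ({x ∈ F | x.2 ≠ π x.1} : Finset (V × V))} : Finset V) =
        ({a ∈ univ | (a, b) ∈ F} : Finset V).erase (π.symm b) := by
      ext a
      simp [and_comm, Equiv.eq_symm_apply, eq_comm]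
    rw [herase, card_erase_of_mem (by simpa using hb), h, Nat.add_sub_cancel]

lemma IsBiregular.exists_perms (hF : IsBiregular r F) :
    ∃ π : Fin r → Equiv.Perm V, (∀ i a, (a, π i a) ∈ F) ∧
      Pairwise fun i j ↦ ∀ a, π i a ≠ π j a := by
  induction r generalizing F with
  | zero => exact ⟨Fin.elim0, fun i ↦ i.elim0, fun i ↦ i.elim0⟩
  | succ r ih =>
    obtain ⟨σ, hσ⟩ := hF.exists_perm
    obtain ⟨π, hπ, hdisj⟩ := ih (hF.filter_ne_perm hσ)
    simp only [mem_filter] at hπ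
    refine ⟨Fin.cons σ π, Fin.cases hσ fun i a ↦ (hπ i a).1, ?_⟩
    refine Fin.cases (Fin.cases (fun h ↦ absurd rfl h) fun j _ a ↦ ((hπ j a).2).symm) fun i ↦ ?_
    exact Fin.cases (fun _ a ↦ (hπ i a).2) fun j hij ↦ hdisj (by simpa using hij)

lemma CutCondition.exists_perms (hG : CutCondition r G) :
    ∃ π : Fin r → Equiv.Perm V, (∀ i a, (a, π i a) ∈ G) ∧
      Pairwise fun i j ↦ ∀ a, π i a ≠ π j a := by
  obtain ⟨F, hFG, hF⟩ := hG.exists_isBiregular_subset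
  obtain ⟨π, hπ, hdisj⟩ := hF.exists_perms
  exact ⟨π, fun i a ↦ hFG (hπ i a), hdisj⟩

end Factor

open scoped BigOperators

section UniformProbability

variable {Ω κ : Type*} [Fintype Ω]

open scoped Classical in
/-- The probability of the event `P` under the uniform distribution on the finite type `Ω`. -/
noncomputable def prob (P : Ω → Prop) : ℝ := 𝔼 ω, if P ω then 1 else 0

lemma prob_eq_card_div (P : Ω → Prop) [DecidablePred P] :
    prob P = #{ω | P ω} / Fintype.card Ω := by
  rw [prob, Fintype.expect_eq_sum_div_card, ← sum_boole]
  congr!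

lemma prob_nonneg (P : Ω → Prop) : 0 ≤ prob P :=
  expect_nonneg fun _ _ ↦ by positivity

lemma prob_mono {P Q : Ω → Prop} (h : ∀ ω, P ω → Q ω) : prob P ≤ prob Q := by
  refine expect_le_expect fun ω _ ↦ ?_
  by_cases hP : P ω
  · simp [hP, h ω hP]
  · simp only [hP, if_false]
    positivity

lemma prob_comp_equiv {Ω' : Type*} [Fintype Ω'] (e : Ω ≃ Ω') (P : Ω' → Prop) :
    prob (fun ω ↦ P (e ω)) = prob P :=
  Fintype.expect_equiv e _ _ fun _ ↦ rfl

lemma prob_eq_one_sub_prob_not [Nonempty Ω] (P : Ω → Prop) :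
    prob P = 1 - prob fun ω ↦ ¬ P ω := by
  rw [eq_sub_iff_add_eq, prob, prob, ← expect_add_distrib, ← Fintype.expect_one (ι := Ω)]
  refine expect_congr rfl fun ω _ ↦ ?_
  by_cases hP : P ω <;> simp [hP]

lemma prob_and_eq_mul_prob_subtype (P Q : Ω → Prop) [Fintype {ω // P ω}] :
    prob (fun ω ↦ P ω ∧ Q ω) = prob P * prob fun ω : {ω // P ω} ↦ Q ω := by
  classical
  simp only [prob_eq_card_div]
  have hP : Fintype.card {ω // P ω} = #{ω | P ω} := Fintype.card_subtype P
  have hPQ : #{ω : {ω // P ω} | Q ω} = #{ω | P ω ∧ Q ω} := by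
    rw [← card_map (Function.Embedding.subtype P)]
    congr 1
    ext ω
    simp [and_comm]
  rw [hP, hPQ]
  rcases eq_or_ne #{ω | P ω} 0 with h | h
  · have h₀ : #{ω | P ω ∧ Q ω} = 0 :=
      Nat.eq_zero_of_le_zero (h ▸ card_le_card (monotone_filter_right _ fun _ _ ↦ And.left))
    simp [h, h₀]
  · field_simp

lemma prob_le_one [Nonempty Ω] (P : Ω → Prop) : prob P ≤ 1 :=
  (expect_le_expect fun _ _ ↦ by split_ifs <;> norm_num).trans_eq Fintype.expect_one

lemma prob_or_le (P Q : Ω → Prop) : prob (fun ω ↦ P ω ∨ Q ω) ≤ prob P + prob Q := by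
  rw [prob, prob, prob, ← expect_add_distrib]
  refine expect_le_expect fun ω _ ↦ ?_
  by_cases hP : P ω <;> by_cases hQ : Q ω <;> simp [hP, hQ]

lemma prob_exists_le (s : Finset κ) (B : κ → Ω → Prop) :
    prob (fun ω ↦ ∃ i ∈ s, B i ω) ≤ ∑ i ∈ s, prob (B i) := by
  simp only [prob, ← expect_sum_comm]
  refine expect_le_expect fun ω _ ↦ ?_
  split_ifs with h
  · obtain ⟨i, hi, hB⟩ := h
    refine le_trans ?_ (single_le_sum (fun j _ ↦ ?_) hi)
    · simp [hB]
    · positivity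
  · exact sum_nonneg fun j _ ↦ by positivity

lemma exists_not_of_prob_lt_one [Nonempty Ω] {P : Ω → Prop} (h : prob P < 1) : ∃ ω, ¬ P ω := by
  by_contra! hP
  simp [prob, hP] at h

lemma exists_forall_not_of_sum_prob_lt_one [Nonempty Ω] (s : Finset κ) (B : κ → Ω → Prop)
    (h : ∑ i ∈ s, prob (B i) < 1) : ∃ ω, ∀ i ∈ s, ¬ B i ω := by
  simpa using exists_not_of_prob_lt_one ((prob_exists_le s B).trans_lt h)

lemma expect_card_filter {ι : Type*} (s : Finset ι) (P : ι → Ω → Prop)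
    [∀ i, DecidablePred (P i)] :
    𝔼 ω, (#{i ∈ s | P i ω} : ℝ) = ∑ i ∈ s, prob (P i) := by
  simp only [prob, ← expect_sum_comm]
  refine expect_congr rfl fun ω _ ↦ ?_
  rw [← sum_boole]
  congr!

lemma prob_le_exp_neg_mul_expect_exp (g : Ω → ℝ) (t : ℝ) :
    prob (fun ω ↦ t ≤ g ω) ≤ Real.exp (-t) * 𝔼 ω, Real.exp (g ω) := by
  rw [prob, mul_expect]
  refine expect_le_expect fun ω _ ↦ ?_
  rw [← Real.exp_add]
  split_ifs with h
  · exact Real.one_le_exp (by linarith)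
  · positivity

end UniformProbability

section Chernoff

variable {ι α : Type*} [Fintype ι] [DecidableEq ι] [Fintype α]

lemma expect_pi_prod (g : ι → α → ℝ) :
    𝔼 f : ι → α, ∏ i, g i (f i) = ∏ i, 𝔼 a, g i a := by
  simp only [Fintype.expect_eq_sum_div_card, prod_div_distrib, prod_univ_sum,
    Fintype.piFinset_univ, Fintype.card_fun, Nat.cast_pow, prod_const, card_univ]

variable [Nonempty α] (A : ι → α → Prop) [∀ i, DecidablePred (A i)]

lemma expect_exp_mul_card_le (c : ℝ) :
    𝔼 f : ι → α, Real.exp (c * #{i | A i (f i)}) ≤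
      Real.exp ((∑ i, prob (A i)) * (Real.exp c - 1)) := by
  have hprod (f : ι → α) : Real.exp (c * #{i | A i (f i)}) =
      ∏ i, (1 + (if A i (f i) then 1 else 0) * (Real.exp c - 1)) := by
    rw [mul_comm, Real.exp_nat_mul, ← prod_const, prod_filter]
    exact prod_congr rfl fun i _ ↦ by split_ifs <;> ring
  have hmean (i : ι) : 𝔼 a, (1 + (if A i a then 1 else 0) * (Real.exp c - 1)) =
      1 + prob (A i) * (Real.exp c - 1) := by
    rw [expect_add_distrib, Fintype.expect_one, ← expect_mul, prob]
    congr!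
  simp only [hprod]
  rw [expect_pi_prod fun i a ↦ 1 + (if A i a then 1 else 0) * (Real.exp c - 1), sum_mul,
    Real.exp_sum]
  simp only [hmean]
  refine prod_le_prod (fun i _ ↦ ?_) fun i _ ↦ ?_
  · nlinarith [prob_nonneg (A i), prob_le_one (A i), Real.exp_pos c]
  · rw [add_comm]
    exact Real.add_one_le_exp _

lemma prob_le_card_le {M η : ℝ} (hη₀ : 0 ≤ η) (hη₁ : η ≤ 1) (hM : 0 ≤ M)
    (hmean : ∑ i, prob (A i) ≤ (1 - η) * M) :
    prob (fun f : ι → α ↦ M ≤ #{i | A i (f i)}) ≤ Real.exp (-(η ^ 2 * M / 4)) := by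
  have hexp : Real.exp (η / 2) - 1 ≤ η / 2 + (η / 2) ^ 2 := by
    have h := Real.abs_exp_sub_one_sub_id_le (x := η / 2) (abs_le.mpr ⟨by linarith, by linarith⟩)
    linarith [(abs_le.mp h).2]
  have hexp₀ : 0 ≤ Real.exp (η / 2) - 1 := by linarith [Real.add_one_le_exp (η / 2)]
  calc prob (fun f : ι → α ↦ M ≤ #{i | A i (f i)})
    _ ≤ prob fun f : ι → α ↦ η / 2 * M ≤ η / 2 * #{i | A i (f i)} :=
      prob_mono fun f hf ↦ mul_le_mul_of_nonneg_left hf (by linarith)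
    _ ≤ Real.exp (-(η / 2 * M)) * Real.exp ((∑ i, prob (A i)) * (Real.exp (η / 2) - 1)) :=
      (prob_le_exp_neg_mul_expect_exp _ _).trans
        (mul_le_mul_of_nonneg_left (expect_exp_mul_card_le A _) (Real.exp_pos _).le)
    _ ≤ Real.exp (-(η ^ 2 * M / 4)) := by
      rw [← Real.exp_add, Real.exp_le_exp]
      have h := mul_le_mul hmean hexp hexp₀ (mul_nonneg (by linarith) hM)
      nlinarith [show 0 ≤ M * η ^ 3 by positivity]

lemma prob_card_le_le {η : ℝ} (hη₀ : 0 ≤ η) (hη₁ : η ≤ 1) :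
    prob (fun f : ι → α ↦ (#{i | A i (f i)} : ℝ) ≤ (1 - η) * ∑ i, prob (A i)) ≤
      Real.exp (-(η ^ 2 * (∑ i, prob (A i)) / 4)) := by
  set μ := ∑ i, prob (A i)
  have hμ : 0 ≤ μ := sum_nonneg fun i _ ↦ prob_nonneg _
  have hexp : Real.exp (-(η / 2)) - 1 ≤ -(η / 2) + (η / 2) ^ 2 := by
    have h := Real.abs_exp_sub_one_sub_id_le (x := -(η / 2))
      (abs_le.mpr ⟨by linarith, by linarith⟩)
    linarith [(abs_le.mp h).2]
  calc prob (fun f : ι → α ↦ (#{i | A i (f i)} : ℝ) ≤ (1 - η) * μ)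
    _ ≤ prob fun f : ι → α ↦ -(η / 2) * ((1 - η) * μ) ≤ -(η / 2) * #{i | A i (f i)} :=
      prob_mono fun f hf ↦ mul_le_mul_of_nonpos_left hf (by linarith)
    _ ≤ Real.exp (-(-(η / 2) * ((1 - η) * μ))) * Real.exp (μ * (Real.exp (-(η / 2)) - 1)) :=
      (prob_le_exp_neg_mul_expect_exp _ _).trans
        (mul_le_mul_of_nonneg_left (expect_exp_mul_card_le A _) (Real.exp_pos _).le)
    _ ≤ Real.exp (-(η ^ 2 * μ / 4)) := by
      rw [← Real.exp_add, Real.exp_le_exp]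
      nlinarith [mul_le_mul_of_nonneg_left hexp hμ]

end Chernoff

section Azuma

lemma expect_exp_le_of_abs_sub_le {ι : Type*} [Fintype ι] [Nonempty ι] {x : ι → ℝ} {c : ℝ}
    (hx : ∀ i j, |x i - x j| ≤ c) :
    𝔼 i, Real.exp (x i) ≤ Real.exp (𝔼 i, x i + c ^ 2 / 2) := by
  set μ := 𝔼 i, x i
  have hdev (i : ι) : |x i - μ| ≤ c := by
    have hμ : x i - μ = 𝔼 j, (x i - x j) := by
      rw [expect_sub_distrib, Fintype.expect_const]
    rw [hμ]
    exact (abs_expect_le _ _).trans (expect_le univ_nonempty fun j _ ↦ hx i j)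
  have hc : 0 ≤ c := (abs_nonneg _).trans (hdev (Classical.arbitrary ι))
  have hpoint (i : ι) :
      Real.exp (x i - μ) ≤ Real.cosh c + (x i - μ) * (Real.sinh c / c) := by
    have hcancel : (x i - μ) / c * c = x i - μ :=
      div_mul_cancel_of_imp fun h ↦ abs_nonpos_iff.mp ((hdev i).trans_eq h)
    have hle : |(x i - μ) / c| ≤ 1 := by
      rw [abs_div, abs_of_nonneg hc]
      exact div_le_one_of_le₀ (hdev i) hc
    have h := Real.exp_mul_le_cosh_add_mul_sinh hle c
    rwa [hcancel, div_mul_eq_mul_div, mul_div_assoc] at h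
  calc 𝔼 i, Real.exp (x i)
    _ = Real.exp μ * 𝔼 i, Real.exp (x i - μ) := by
      rw [mul_expect]
      exact expect_congr rfl fun i _ ↦ by rw [← Real.exp_add, add_sub_cancel]
    _ ≤ Real.exp μ * 𝔼 i, (Real.cosh c + (x i - μ) * (Real.sinh c / c)) := by
      gcongr with i
      exact hpoint i
    _ = Real.exp μ * Real.cosh c := by
      rw [expect_add_distrib, ← expect_mul, expect_sub_distrib, Fintype.expect_const,
        Fintype.expect_const, sub_self, zero_mul, add_zero]
    _ ≤ Real.exp (μ + c ^ 2 / 2) := by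
      rw [Real.exp_add]
      gcongr
      exact Real.cosh_le_exp_half_sq c

/-- The Lipschitz condition for functions of a random permutation: composing the argument with a
transposition changes the value by at most `c`. -/
def SwapLipschitz {α : Type*} [DecidableEq α] (c : ℝ) (f : Equiv.Perm α → ℝ) : Prop :=
  ∀ σ x y, |f (σ * Equiv.swap x y) - f σ| ≤ c

namespace SwapLipschitz

variable {α : Type*} [DecidableEq α] {c : ℝ} {f : Equiv.Perm α → ℝ}

lemma abs_swap_mul_sub_le (hf : SwapLipschitz c f) (σ : Equiv.Perm α) (x y : α) :
    |f (Equiv.swap x y * σ) - f σ| ≤ c := by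
  rw [Equiv.swap_mul_eq_mul_swap]
  exact hf _ _ _

lemma const_mul (hf : SwapLipschitz c f) {l : ℝ} (hl : 0 ≤ l) :
    SwapLipschitz (l * c) fun σ ↦ l * f σ := by
  intro σ x y
  rw [← mul_sub, abs_mul, abs_of_nonneg hl]
  exact mul_le_mul_of_nonneg_left (hf σ x y) hl

lemma neg (hf : SwapLipschitz c f) : SwapLipschitz c fun σ ↦ -f σ := by
  intro σ x y
  rw [neg_sub_neg, abs_sub_comm]
  exact hf σ x y

end SwapLipschitz

open Equiv Equiv.Perm

variable {n : ℕ}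

lemma decomposeFin_symm_mul_swap (p : Fin (n + 1)) (e : Perm (Fin n)) (x y : Fin n) :
    decomposeFin.symm (p, e * swap x y) = decomposeFin.symm (p, e) * swap x.succ y.succ := by
  ext z
  refine Fin.cases ?_ (fun z ↦ ?_) z
  · have hzero : swap x.succ y.succ 0 = 0 :=
      swap_apply_of_ne_of_ne (Fin.succ_ne_zero _).symm (Fin.succ_ne_zero _).symm
    simp [hzero]
  · have hsucc : swap x.succ y.succ z.succ = (swap x y z).succ := by
      simp only [swap_apply_def, Fin.succ_inj]
      split_ifs <;> rfl
    simp [hsucc]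

lemma decomposeFin_symm_eq_swap_mul (p q : Fin (n + 1)) (e : Perm (Fin n)) :
    decomposeFin.symm (p, e) = swap 0 p * (swap 0 q * decomposeFin.symm (q, e)) := by
  ext z
  refine Fin.cases ?_ (fun z ↦ ?_) z <;> simp

lemma expect_perm_fin_succ (g : Perm (Fin (n + 1)) → ℝ) :
    𝔼 σ, g σ = 𝔼 p, 𝔼 e, g (decomposeFin.symm (p, e)) := by
  rw [← expect_product' univ univ fun p e ↦ g (decomposeFin.symm (p, e)), univ_product_univ]
  exact Fintype.expect_equiv decomposeFin _ _ fun σ ↦ by simp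

namespace SwapLipschitz

variable {c : ℝ}

lemma abs_expect_decomposeFin_sub_le {f : Perm (Fin (n + 1)) → ℝ} (hf : SwapLipschitz c f)
    (p q : Fin (n + 1)) :
    |𝔼 e, f (decomposeFin.symm (p, e)) - 𝔼 e, f (decomposeFin.symm (q, e))| ≤ 2 * c := by
  rw [← expect_sub_distrib]
  refine (abs_expect_le _ _).trans (expect_le univ_nonempty fun e _ ↦ ?_)
  set τ := decomposeFin.symm (q, e)
  rw [decomposeFin_symm_eq_swap_mul p q e]
  linarith [abs_sub_le (f (swap 0 p * (swap 0 q * τ))) (f (swap 0 q * τ)) (f τ),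
    hf.abs_swap_mul_sub_le (swap 0 q * τ) 0 p, hf.abs_swap_mul_sub_le τ 0 q]

/- The martingale exposes `σ 0` first; the remaining values form a permutation of one point
fewer, to which induction applies, and the conditional means differ by at most `2 c`. -/
lemma expect_exp_le {f : Perm (Fin n) → ℝ} (hf : SwapLipschitz c f) :
    𝔼 σ, Real.exp (f σ) ≤ Real.exp (𝔼 σ, f σ + 2 * n * c ^ 2) := by
  induction n with
  | zero => simp
  | succ n ih =>
    have hfibre (p : Fin (n + 1)) : 𝔼 e, Real.exp (f (decomposeFin.symm (p, e))) ≤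
        Real.exp (𝔼 e, f (decomposeFin.symm (p, e))) * Real.exp (2 * n * c ^ 2) := by
      rw [← Real.exp_add]
      refine ih fun σ x y ↦ ?_
      rw [decomposeFin_symm_mul_swap]
      exact hf _ _ _
    simp only [expect_perm_fin_succ]
    calc 𝔼 p, 𝔼 e, Real.exp (f (decomposeFin.symm (p, e)))
      _ ≤ (𝔼 p, Real.exp (𝔼 e, f (decomposeFin.symm (p, e)))) * Real.exp (2 * n * c ^ 2) := by
        rw [expect_mul]
        exact expect_le_expect fun p _ ↦ hfibre p
      _ ≤ Real.exp (𝔼 p, 𝔼 e, f (decomposeFin.symm (p, e)) + (2 * c) ^ 2 / 2) *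
          Real.exp (2 * n * c ^ 2) := by
        gcongr
        exact expect_exp_le_of_abs_sub_le hf.abs_expect_decomposeFin_sub_le
      _ = _ := by
        rw [← Real.exp_add]
        push_cast
        ring_nf

variable {f : Perm (Fin n) → ℝ} {τ : ℝ}

lemma prob_expect_add_le (hf : SwapLipschitz c f) (hn : 0 < n) (hc : 0 < c) (hτ : 0 ≤ τ) :
    prob (fun σ ↦ 𝔼 ρ, f ρ + τ ≤ f σ) ≤ Real.exp (-(τ ^ 2 / (8 * n * c ^ 2))) := by
  set μ := 𝔼 ρ, f ρ
  have : (0 : ℝ) < n := Nat.cast_pos.mpr hn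
  obtain ⟨l, hl⟩ : ∃ l, l = τ / (4 * n * c ^ 2) := ⟨_, rfl⟩
  have hl₀ : 0 ≤ l := by rw [hl]; positivity
  calc prob (fun σ ↦ μ + τ ≤ f σ)
    _ ≤ prob fun σ ↦ l * (μ + τ) ≤ l * f σ :=
      prob_mono fun σ hσ ↦ mul_le_mul_of_nonneg_left hσ hl₀
    _ ≤ Real.exp (-(l * (μ + τ))) * Real.exp (l * μ + 2 * n * (l * c) ^ 2) := by
      refine (prob_le_exp_neg_mul_expect_exp _ _).trans ?_
      rw [mul_expect univ f l]
      gcongr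
      exact (hf.const_mul hl₀).expect_exp_le
    _ = Real.exp (-(τ ^ 2 / (8 * n * c ^ 2))) := by
      rw [← Real.exp_add, hl]
      congr 1
      field_simp
      ring

lemma prob_le_expect_sub (hf : SwapLipschitz c f) (hn : 0 < n) (hc : 0 < c) (hτ : 0 ≤ τ) :
    prob (fun σ ↦ f σ ≤ 𝔼 ρ, f ρ - τ) ≤ Real.exp (-(τ ^ 2 / (8 * n * c ^ 2))) := by
  refine (prob_mono fun σ hσ ↦ ?_).trans (hf.neg.prob_expect_add_le hn hc hτ)
  rw [expect_neg_distrib]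
  linarith

end SwapLipschitz

end Azuma

section Pseudorandom

lemma sum_sq_edgeCount_le {α β : Type*} [Fintype α] [DecidableEq α] [DecidableEq β]
    {G : Finset (α × β)} {K : ℝ} (hK : 0 ≤ K)
    (hcodeg : ∀ b b', b ≠ b' → (#{a | (a, b) ∈ G ∧ (a, b') ∈ G} : ℝ) ≤ K) (U : Finset β) :
    ∑ a, (edgeCount G {a} U : ℝ) ^ 2 ≤ #U * Fintype.card α + #U ^ 2 * K := by
  have hsq (a : α) : (edgeCount G {a} U : ℝ) ^ 2 =
      ∑ b ∈ U, ∑ b' ∈ U, if (a, b) ∈ G ∧ (a, b') ∈ G then 1 else 0 := by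
    rw [edgeCount_singleton_left, sq, ← sum_boole, sum_mul_sum]
    exact sum_congr rfl fun _ _ ↦ sum_congr rfl fun _ _ ↦ by rw [ite_zero_mul_ite_zero, one_mul]
  have hpair (b b' : β) : (#{a | (a, b) ∈ G ∧ (a, b') ∈ G} : ℝ) ≤
      (if b = b' then (Fintype.card α : ℝ) else 0) + K := by
    split_ifs with h
    · have hle : (#{a | (a, b) ∈ G ∧ (a, b') ∈ G} : ℝ) ≤ Fintype.card α :=
        Nat.cast_le.mpr (card_le_univ _)
      linarith
    · linarith [hcodeg b b' h]
  calc ∑ a, (edgeCount G {a} U : ℝ) ^ 2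
    _ = ∑ b ∈ U, ∑ b' ∈ U, (#{a | (a, b) ∈ G ∧ (a, b') ∈ G} : ℝ) := by
      simp only [hsq, ← sum_boole]
      rw [sum_comm]
      exact sum_congr rfl fun _ _ ↦ sum_comm
    _ ≤ ∑ b ∈ U, ∑ b' ∈ U, ((if b = b' then (Fintype.card α : ℝ) else 0) + K) :=
      sum_le_sum fun _ _ ↦ sum_le_sum fun _ _ ↦ hpair _ _
    _ = ∑ _ ∈ U, ((Fintype.card α : ℝ) + #U * K) := by
      refine sum_congr rfl fun _ hb ↦ ?_
      rw [sum_add_distrib, sum_ite_eq, if_pos hb, sum_const, nsmul_eq_mul]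
    _ = #U * Fintype.card α + #U ^ 2 * K := by
      rw [sum_const, nsmul_eq_mul]
      ring

lemma edgeCount_le_sum_sq_div {α β : Type*} [Fintype α] [DecidableEq α] [DecidableEq β]
    (G : Finset (α × β)) (S : Finset α) (U : Finset β) {c : ℝ} (hc : 0 < c) :
    (edgeCount G S U : ℝ) ≤ (∑ a, (edgeCount G {a} U : ℝ) ^ 2) / (2 * c) + #S * (c / 2) := by
  have hamgm (x : ℝ) : x ≤ x ^ 2 / (2 * c) + c / 2 := by
    have h : x ^ 2 / (2 * c) + c / 2 - x = (x - c) ^ 2 / (2 * c) := by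
      field_simp
      ring
    linarith [show 0 ≤ (x - c) ^ 2 / (2 * c) by positivity]
  calc (edgeCount G S U : ℝ)
    _ = ∑ a ∈ S, (edgeCount G {a} U : ℝ) := by rw [edgeCount_eq_sum_left, Nat.cast_sum]
    _ ≤ ∑ a ∈ S, ((edgeCount G {a} U : ℝ) ^ 2 / (2 * c) + c / 2) :=
      sum_le_sum fun a _ ↦ hamgm _
    _ = (∑ a ∈ S, (edgeCount G {a} U : ℝ) ^ 2) / (2 * c) + #S * (c / 2) := by
      rw [sum_add_distrib, sum_div, sum_const, nsmul_eq_mul]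
    _ ≤ (∑ a, (edgeCount G {a} U : ℝ) ^ 2) / (2 * c) + #S * (c / 2) := by
      gcongr
      exact subset_univ S

variable {V : Type*} [Fintype V] [DecidableEq V] {G : Finset (V × V)} {p δ : ℝ}

/-- One-sided pseudorandomness of a balanced bipartite graph of density about `p`: degrees are
not much smaller, and codegrees not much larger, than in a random graph. -/
structure IsPseudorandom (p δ : ℝ) (G : Finset (V × V)) : Prop where
  left_degree (a : V) : (1 - δ) * (Fintype.card V * p) ≤ edgeCount G {a} univ
  right_degree (b : V) : (1 - δ) * (Fintype.card V * p) ≤ edgeCount G univ {b}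
  left_codegree (a a' : V) (h : a ≠ a') :
    (#{b | (a, b) ∈ G ∧ (a', b) ∈ G} : ℝ) ≤ (1 + δ) * (Fintype.card V * p ^ 2)
  right_codegree (b b' : V) (h : b ≠ b') :
    (#{a | (a, b) ∈ G ∧ (a, b') ∈ G} : ℝ) ≤ (1 + δ) * (Fintype.card V * p ^ 2)

lemma edgeCount_image_swap {α β : Type*} [DecidableEq α] [DecidableEq β] (G : Finset (α × β))
    (S : Finset α) (T : Finset β) : edgeCount (G.image Prod.swap) T S = edgeCount G S T := by
  rw [edgeCount, filter_image, card_image_of_injective _ Prod.swap_injective, edgeCount]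
  simp only [Prod.fst_swap, Prod.snd_swap, and_comm]

lemma IsPseudorandom.image_swap (hG : IsPseudorandom p δ G) :
    IsPseudorandom p δ (G.image Prod.swap) where
  left_degree a := by simpa only [edgeCount_image_swap] using hG.right_degree a
  right_degree b := by simpa only [edgeCount_image_swap] using hG.left_degree b
  left_codegree a a' h := by simpa [Prod.swap_eq_iff_eq_swap] using hG.right_codegree a a' h
  right_codegree b b' h := by simpa [Prod.swap_eq_iff_eq_swap] using hG.left_codegree b b' h

/- Second moment method: `c ≈ #U * p` is the expected number of neighbours in `U`. -/
lemma IsPseudorandom.edgeCount_le (hG : IsPseudorandom p δ G) (hp : 0 < p) (hδ : 0 ≤ δ)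
    (S U : Finset V) :
    (edgeCount G S U : ℝ) ≤ #U * √(Fintype.card V) / 2 + #U * ((1 + δ) * (Fintype.card V * p)) / 2
      + #S * (#U * p + √(Fintype.card V)) / 2 := by
  obtain hV | hV := isEmpty_or_nonempty V
  · simp [S.eq_empty_of_isEmpty, edgeCount]
  have hν : (0 : ℝ) < Fintype.card V := Nat.cast_pos.mpr Fintype.card_pos
  set ν : ℝ := (Fintype.card V : ℝ)
  have hsqrt : 0 < √ν := Real.sqrt_pos.mpr hν
  have hc : 0 < #U * p + √ν := by positivity
  have hbound := edgeCount_le_sum_sq_div G S U hc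
  have hsum := sum_sq_edgeCount_le (by positivity) hG.right_codegree U
  have hdiv : (∑ a, (edgeCount G {a} U : ℝ) ^ 2) / (2 * (#U * p + √ν)) ≤
      #U * √ν / 2 + #U * ((1 + δ) * (ν * p)) / 2 := by
    rw [div_le_iff₀ (by positivity)]
    refine hsum.trans ?_
    change #U * ν + #U ^ 2 * ((1 + δ) * (ν * p ^ 2)) ≤ _
    have hνsq : #U * ν = #U * (√ν * √ν) := by rw [Real.mul_self_sqrt hν.le]
    rw [hνsq]
    have h₁ : 0 ≤ #U * √ν * (#U * p) := by positivity
    have h₂ : 0 ≤ #U * ((1 + δ) * (ν * p)) * √ν := by positivity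
    linarith
  linarith

lemma IsPseudorandom.le_edgeCount_of_card_le (hG : IsPseudorandom p δ G) (hp : 0 < p)
    (hδ : 0 ≤ δ) (hsqrt : √(Fintype.card V) ≤ δ * (Fintype.card V * p)) {S T : Finset V}
    (hST : Fintype.card V ≤ #S + #T) :
    p * ((1 - 5 / 2 * δ) * Fintype.card V * #S -
      (Fintype.card V - #T) * (Fintype.card V + #S) / 2) ≤ edgeCount G S T := by
  have hmix := hG.edgeCount_le hp hδ S Tᶜ
  have hcompl : (#Tᶜ : ℝ) = Fintype.card V - #T := by
    rw [card_compl, Nat.cast_sub (card_le_univ T)]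
  have hTS : (#Tᶜ : ℝ) ≤ #S := by
    rw [hcompl]
    linarith [show (Fintype.card V : ℝ) ≤ #S + #T by exact_mod_cast hST]
  have hsplit : (edgeCount G S univ : ℝ) = edgeCount G S T + edgeCount G S Tᶜ := by
    rw [edgeCount_eq_sum_right G S univ, ← sum_add_sum_compl T, ← edgeCount_eq_sum_right,
      ← edgeCount_eq_sum_right, Nat.cast_add]
  have hdegree : #S * ((1 - δ) * (Fintype.card V * p)) ≤ edgeCount G S univ := by
    rw [edgeCount_eq_sum_left, Nat.cast_sum, ← nsmul_eq_mul]
    exact card_nsmul_le_sum _ _ _ fun a _ ↦ hG.left_degree a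
  rw [← hcompl]
  set ν : ℝ := (Fintype.card V : ℝ)
  set u : ℝ := (#Tᶜ : ℝ)
  set s : ℝ := (#S : ℝ)
  have hs : 0 ≤ s := Nat.cast_nonneg _
  have h₁ : u * √ν ≤ s * √ν := by gcongr
  have h₂ : s * √ν ≤ s * (δ * (ν * p)) := by gcongr
  have h₃ : δ * (ν * p) * u ≤ δ * (ν * p) * s := by gcongr
  linarith

variable {ν s t : ℝ}

lemma mul_div_eight_le_of_le (hδ : δ ≤ 1 / 20) (hs : 0 ≤ s) (ht : t ≤ ν) (hst : s ≤ t)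
    (hν : ν ≤ s + t) :
    ν * s / 8 ≤ (1 - 5 / 2 * δ) * ν * s - (ν - t) * (ν + s) / 2 := by
  have hνs : 0 ≤ ν * s := mul_nonneg (by linarith) hs
  have hδνs : δ * (ν * s) ≤ 1 / 20 * (ν * s) := mul_le_mul_of_nonneg_right hδ hνs
  have hkey : (ν - t) * (ν + s) ≤ 3 / 2 * (ν * s) := by
    obtain h | h := le_total (2 * s) ν
    · have hle : (ν - t) * (ν + s) ≤ s * (ν + s) := by gcongr <;> linarith
      nlinarith [hle]
    · have hle : (ν - t) * (ν + s) ≤ (ν - s) * (ν + s) := by gcongr; linarith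
      nlinarith [hle]
  nlinarith

lemma mul_add_sub_le_of_le (hδ₀ : 0 ≤ δ) (hδ : δ ≤ 1 / 20) (hs : 0 ≤ s) (ht : t ≤ ν)
    (hst : s ≤ t) (hν : ν ≤ s + t) :
    (1 - 5 * δ) * ν * (s + t - ν) ≤ (1 - 5 / 2 * δ) * ν * s - (ν - t) * (ν + s) / 2 := by
  obtain ⟨u, rfl⟩ : ∃ u, t = ν - u := ⟨ν - t, by ring⟩
  have hν₀ : 0 ≤ ν := by linarith
  have hkey : 0 ≤ 5 / 2 * δ * ν * (s - 2 * u) + u * (ν - s) / 2 := by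
    obtain h | h := le_total (2 * u) s
    · have h₁ : 0 ≤ 5 / 2 * δ * ν * (s - 2 * u) := mul_nonneg (by positivity) (by linarith)
      have h₂ : 0 ≤ u * (ν - s) := mul_nonneg (by linarith) (by linarith)
      linarith
    · have h₁ : u * (ν / 3) ≤ u * (ν - s) := by gcongr <;> linarith
      have h₂ : δ * (ν * (2 * u - s)) ≤ 1 / 20 * (ν * (2 * u - s)) :=
        mul_le_mul_of_nonneg_right hδ (mul_nonneg hν₀ (by linarith))
      have h₃ : 0 ≤ ν * s := by positivity
      nlinarith [h₃]
  nlinarith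

lemma IsPseudorandom.cut_bounds_of_card_le (hG : IsPseudorandom p δ G) (hp : 0 < p)
    (hδ₀ : 0 ≤ δ) (hδ : δ ≤ 1 / 20) (hsqrt : √(Fintype.card V) ≤ δ * (Fintype.card V * p))
    {S T : Finset V} (hST : Fintype.card V ≤ #S + #T) (hle : #S ≤ #T) :
    Fintype.card V * p * #S / 8 ≤ edgeCount G S T ∧
      (1 - 5 * δ) * (Fintype.card V * p) * (#S + #T - Fintype.card V) ≤ edgeCount G S T := by
  have hmain := hG.le_edgeCount_of_card_le hp hδ₀ hsqrt hST
  have hs : (0 : ℝ) ≤ #S := Nat.cast_nonneg _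
  have ht : (#T : ℝ) ≤ Fintype.card V := Nat.cast_le.mpr (card_le_univ T)
  have hst : (#S : ℝ) ≤ #T := Nat.cast_le.mpr hle
  have hν : (Fintype.card V : ℝ) ≤ #S + #T := by exact_mod_cast hST
  have h₁ := mul_le_mul_of_nonneg_left (mul_div_eight_le_of_le hδ hs ht hst hν) hp.le
  have h₂ := mul_le_mul_of_nonneg_left (mul_add_sub_le_of_le hδ₀ hδ hs ht hst hν) hp.le
  constructor <;> linarith

lemma IsPseudorandom.cut_bounds (hG : IsPseudorandom p δ G) (hp : 0 < p)
    (hδ₀ : 0 ≤ δ) (hδ : δ ≤ 1 / 20) (hsqrt : √(Fintype.card V) ≤ δ * (Fintype.card V * p))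
    {S T : Finset V} (hST : Fintype.card V ≤ #S + #T) :
    Fintype.card V * p * (min #S #T : ℕ) / 8 ≤ edgeCount G S T ∧
      (1 - 5 * δ) * (Fintype.card V * p) * (#S + #T - Fintype.card V) ≤ edgeCount G S T := by
  obtain h | h := le_total #S #T
  · rw [min_eq_left h]
    exact hG.cut_bounds_of_card_le hp hδ₀ hδ hsqrt hST h
  · rw [min_eq_right h, ← edgeCount_image_swap, add_comm (#S : ℝ)]
    exact hG.image_swap.cut_bounds_of_card_le hp hδ₀ hδ hsqrt (by rwa [add_comm]) h

end Pseudorandom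

section CutSum

variable {V : Type*} [Fintype V]

lemma sum_pow_card (y : ℝ) : ∑ S : Finset V, y ^ #S = (1 + y) ^ Fintype.card V := by
  simpa [eq_comm] using prod_one_add (f := fun _ : V ↦ y) univ

lemma sum_pow_card_compl [DecidableEq V] (y : ℝ) :
    ∑ S : Finset V, y ^ #Sᶜ = (1 + y) ^ Fintype.card V := by
  rw [← sum_pow_card]
  exact Equiv.sum_comp compl_involutive.toPerm fun S : Finset V ↦ y ^ #S

lemma one_add_pow_le {y : ℝ} {n : ℕ} (hy₀ : 0 ≤ y) (hy : n * y ≤ 1) :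
    (1 + y) ^ n ≤ 1 + 2 * (n * y) := by
  have hny : 0 ≤ n * y := by positivity
  have hexp := (abs_le.mp (Real.abs_exp_sub_one_sub_id_le (abs_le.mpr ⟨by linarith, hy⟩))).2
  calc (1 + y) ^ n
    _ ≤ Real.exp y ^ n := by
      gcongr
      rw [add_comm]
      exact Real.add_one_le_exp y
    _ = Real.exp (n * y) := (Real.exp_nat_mul y n).symm
    _ ≤ 1 + 2 * (n * y) := by nlinarith

/- `|S| + |T| > |V|` forces `S` and `T` to be nonempty and `|Tᶜ| < |S|`, so that
`2 min(|S|, |T|)` is at least `|S| + |Tᶜ|` or `|Sᶜ| + |T|`. -/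
lemma pow_two_mul_min_card_le [DecidableEq V] {y : ℝ} (hy₀ : 0 ≤ y) (hy₁ : y ≤ 1)
    {S T : Finset V} (hST : Fintype.card V < #S + #T) :
    y ^ (2 * min #S #T) ≤ (if S = ∅ then 0 else y ^ #S) * y ^ #Tᶜ +
      y ^ #Sᶜ * if T = ∅ then 0 else y ^ #T := by
  have hS := card_add_card_compl S
  have hT := card_add_card_compl T
  have hS₀ : S ≠ ∅ := fun h ↦ by rw [h, card_empty] at hST; lia
  have hT₀ : T ≠ ∅ := fun h ↦ by rw [h, card_empty] at hST; lia
  rw [if_neg hS₀, if_neg hT₀, ← pow_add, ← pow_add]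
  obtain h | h := le_total #S #T
  · have hle := pow_le_pow_of_le_one hy₀ hy₁ (show #S + #Tᶜ ≤ 2 * min #S #T by lia)
    exact hle.trans (le_add_of_nonneg_right (by positivity))
  · have hle := pow_le_pow_of_le_one hy₀ hy₁ (show #Sᶜ + #T ≤ 2 * min #S #T by lia)
    exact hle.trans (le_add_of_nonneg_left (by positivity))

lemma sum_exp_neg_mul_min_card_le {κ : ℝ} (hκ : 0 ≤ κ)
    (hsmall : Fintype.card V * Real.exp (-(κ / 2)) ≤ 1) :
    ∑ c : Finset V × Finset V with Fintype.card V < #c.1 + #c.2,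
      Real.exp (-(κ * (min #c.1 #c.2 : ℕ))) ≤ 12 * (Fintype.card V * Real.exp (-(κ / 2))) := by
  classical
  set y := Real.exp (-(κ / 2)) with hy
  have hy₀ : 0 ≤ y := (Real.exp_pos _).le
  have hy₁ : y ≤ 1 := Real.exp_le_one_iff.mpr (by linarith)
  set w : Finset V → ℝ := fun S ↦ if S = ∅ then 0 else y ^ #S
  have hw₀ (S : Finset V) : 0 ≤ w S := by positivity
  have hw : ∑ S, w S = (1 + y) ^ Fintype.card V - 1 := by
    have hterm (S : Finset V) : w S = y ^ #S - if S = ∅ then 1 else 0 := by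
      by_cases h : S = ∅ <;> simp [w, h]
    simp only [hterm, sum_sub_distrib, sum_pow_card, sum_ite_eq', mem_univ, if_true]
  have hexp (m : ℕ) : Real.exp (-(κ * m)) = y ^ (2 * m) := by
    rw [hy, ← Real.exp_nat_mul]
    push_cast
    ring_nf
  calc ∑ c : Finset V × Finset V with Fintype.card V < #c.1 + #c.2,
        Real.exp (-(κ * (min #c.1 #c.2 : ℕ)))
    _ ≤ ∑ c : Finset V × Finset V with Fintype.card V < #c.1 + #c.2,
        (w c.1 * y ^ #c.2ᶜ + y ^ #c.1ᶜ * w c.2) := sum_le_sum fun c hc ↦ by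
      rw [hexp]
      exact pow_two_mul_min_card_le hy₀ hy₁ (mem_filter.mp hc).2
    _ ≤ ∑ c : Finset V × Finset V, (w c.1 * y ^ #c.2ᶜ + y ^ #c.1ᶜ * w c.2) :=
      sum_le_sum_of_subset_of_nonneg (filter_subset _ _) fun c _ _ ↦
        add_nonneg (mul_nonneg (hw₀ _) (by positivity)) (mul_nonneg (by positivity) (hw₀ _))
    _ = 2 * (((1 + y) ^ Fintype.card V - 1) * (1 + y) ^ Fintype.card V) := by
      rw [sum_add_distrib, Fintype.sum_prod_type, Fintype.sum_prod_type]
      simp only [← sum_mul_sum, hw, sum_pow_card_compl]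
      ring
    _ ≤ 12 * (Fintype.card V * y) := by
      have hle := one_add_pow_le hy₀ hsmall
      have hge : 1 ≤ (1 + y) ^ Fintype.card V := one_le_pow₀ (by linarith)
      nlinarith

end CutSum

section RandomImage

open scoped Pointwise

lemma exists_perm_image_eq {α : Type*} [DecidableEq α] {U W : Finset α} (h : #U = #W) :
    ∃ τ : Equiv.Perm α, U.image τ = W := by
  have : MulAction.IsPretransitive (Equiv.Perm α) (Set.powersetCard α #U) :=
    Set.powersetCard.isPretransitive
  obtain ⟨τ, hτ⟩ := MulAction.exists_smul_eq (Equiv.Perm α)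
    (⟨U, rfl⟩ : Set.powersetCard α #U) ⟨W, h.symm⟩
  exact ⟨τ, congrArg Subtype.val hτ⟩

lemma prob_image_eq {α : Type*} [Fintype α] [DecidableEq α] {U W : Finset α} (h : #W = #U) :
    prob (fun σ : Equiv.Perm α ↦ U.image σ = W) = 1 / (Fintype.card α).choose #U := by
  have hinvariant (W' : Finset α) (hW' : W' ∈ powersetCard #U univ) :
      prob (fun σ : Equiv.Perm α ↦ U.image σ = W') =
        prob fun σ : Equiv.Perm α ↦ U.image σ = W := by
    obtain ⟨τ, rfl⟩ := exists_perm_image_eq ((mem_powersetCard_univ.mp hW').trans h.symm)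
    rw [← prob_comp_equiv (Equiv.mulLeft τ) fun σ ↦ U.image σ = W'.image τ]
    refine congrArg prob (funext fun σ ↦ propext ?_)
    rw [Equiv.coe_mulLeft, Equiv.Perm.coe_mul, ← image_image, (image_injective τ.injective).eq_iff]
  have htotal := expect_card_filter (powersetCard #U (univ : Finset α))
    fun W' (σ : Equiv.Perm α) ↦ U.image σ = W'
  have hone (σ : Equiv.Perm α) : #{W' ∈ powersetCard #U univ | U.image σ = W'} = 1 := by
    rw [Finset.filter_eq, if_pos, card_singleton]
    rw [mem_powersetCard_univ, card_image_of_injective _ σ.injective]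
  simp only [hone, Nat.cast_one, Fintype.expect_const] at htotal
  rw [sum_congr rfl hinvariant, sum_const, card_powersetCard, card_univ, nsmul_eq_mul] at htotal
  exact eq_one_div_of_mul_eq_one_right htotal.symm

variable {ι : Type*} [Fintype ι]

lemma expect_card_image_mem {α : Type*} [Fintype α] [DecidableEq α] {c : ℕ} {B : ι → Finset α}
    (hB : ∀ i, #(B i) = c) {N : Finset (Finset α)} (hN : ∀ W ∈ N, #W = c) :
    𝔼 σ : Equiv.Perm α, (#{i | (B i).image σ ∈ N} : ℝ) =
      Fintype.card ι * (#N / (Fintype.card α).choose c) := by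
  have hprob (i : ι) : prob (fun σ : Equiv.Perm α ↦ (B i).image σ ∈ N) =
      #N / (Fintype.card α).choose c := by
    have hsum := expect_card_filter N fun W (σ : Equiv.Perm α) ↦ (B i).image σ = W
    have hterm (W : Finset α) (hW : W ∈ N) : prob (fun σ : Equiv.Perm α ↦ (B i).image σ = W) =
        1 / (Fintype.card α).choose c := by
      rw [prob_image_eq ((hN W hW).trans (hB i).symm), hB]
    rw [sum_congr rfl hterm, sum_const, nsmul_eq_mul, mul_one_div] at hsum
    rw [← hsum, prob]
    refine expect_congr rfl fun σ _ ↦ ?_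
    rw [Finset.filter_eq]
    split_ifs <;> simp
  rw [expect_card_filter, sum_congr rfl fun i _ ↦ hprob i, sum_const, card_univ, nsmul_eq_mul]

variable {α : Type*} [DecidableEq α] {B : ι → Finset α}

lemma card_image_mul_swap_mem_le (hB : Pairwise fun i j ↦ Disjoint (B i) (B j))
    (N : Finset (Finset α)) (σ : Equiv.Perm α) (x y : α) :
    #{i | (B i).image (σ * Equiv.swap x y) ∈ N} ≤ #{i | (B i).image σ ∈ N} + 2 := by
  classical
  have hone (z : α) : #{i | z ∈ B i} ≤ 1 := card_le_one.mpr fun i hi j hj ↦ by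
    by_contra hij
    exact disjoint_left.mp (hB hij) (mem_filter.mp hi).2 (mem_filter.mp hj).2
  have hsubset : ({i | (B i).image (σ * Equiv.swap x y) ∈ N} : Finset ι) ⊆
      univ.filter (fun i ↦ (B i).image σ ∈ N) ∪
        (univ.filter (fun i ↦ x ∈ B i) ∪ univ.filter fun i ↦ y ∈ B i) := by
    intro i hi
    simp only [mem_union, mem_filter, mem_univ, true_and] at hi ⊢
    by_contra! hnot
    obtain ⟨hσ, hx, hy⟩ := hnot
    have himage : (B i).image (σ * Equiv.swap x y) = (B i).image σ := by
      refine image_congr fun z hz ↦ ?_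
      rw [Equiv.Perm.mul_apply, Equiv.swap_apply_of_ne_of_ne]
      exacts [ne_of_mem_of_not_mem hz hx, ne_of_mem_of_not_mem hz hy]
    exact hσ (himage ▸ hi)
  have h₁ := card_le_card hsubset
  have h₂ := card_union_le (univ.filter fun i ↦ (B i).image σ ∈ N)
    (univ.filter (fun i ↦ x ∈ B i) ∪ univ.filter fun i ↦ y ∈ B i)
  have h₃ := card_union_le (univ.filter fun i ↦ x ∈ B i) (univ.filter fun i ↦ y ∈ B i)
  linarith [hone x, hone y]

lemma swapLipschitz_card_image_mem (hB : Pairwise fun i j ↦ Disjoint (B i) (B j))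
    (N : Finset (Finset α)) :
    SwapLipschitz 2 fun σ : Equiv.Perm α ↦ (#{i | (B i).image σ ∈ N} : ℝ) := by
  intro σ x y
  have h₁ := card_image_mul_swap_mem_le hB N σ x y
  have h₂ := card_image_mul_swap_mem_le hB N (σ * Equiv.swap x y) x y
  rw [mul_assoc, Equiv.swap_mul_self, mul_one] at h₂
  simp only [abs_sub_le_iff, sub_le_iff_le_add']
  exact ⟨by exact_mod_cast h₁, by exact_mod_cast h₂⟩

variable {n c : ℕ} {B : ι → Finset (Fin n)} {N : Finset (Finset (Fin n))} {μ τ : ℝ}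

lemma prob_add_le_card_image_mem (hn : 0 < n) (hB : Pairwise fun i j ↦ Disjoint (B i) (B j))
    (hBc : ∀ i, #(B i) = c) (hN : ∀ W ∈ N, #W = c) (hτ : 0 ≤ τ)
    (hμ : Fintype.card ι * (#N / n.choose c) ≤ μ) :
    prob (fun σ : Equiv.Perm (Fin n) ↦ μ + τ ≤ #{i | (B i).image σ ∈ N}) ≤
      Real.exp (-(τ ^ 2 / (32 * n))) := by
  refine (prob_mono fun σ hσ ↦ ?_).trans
    (((swapLipschitz_card_image_mem hB N).prob_expect_add_le hn two_pos hτ).trans_eq ?_)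
  · rw [expect_card_image_mem hBc hN, Fintype.card_fin]
    linarith
  · ring_nf

lemma prob_card_image_mem_le_sub (hn : 0 < n) (hB : Pairwise fun i j ↦ Disjoint (B i) (B j))
    (hBc : ∀ i, #(B i) = c) (hN : ∀ W ∈ N, #W = c) (hτ : 0 ≤ τ)
    (hμ : μ ≤ Fintype.card ι * (#N / n.choose c)) :
    prob (fun σ : Equiv.Perm (Fin n) ↦ (#{i | (B i).image σ ∈ N} : ℝ) ≤ μ - τ) ≤
      Real.exp (-(τ ^ 2 / (32 * n))) := by
  refine (prob_mono fun σ hσ ↦ ?_).trans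
    (((swapLipschitz_card_image_mem hB N).prob_le_expect_sub hn two_pos hτ).trans_eq ?_)
  · rw [expect_card_image_mem hBc hN, Fintype.card_fin]
    linarith
  · ring_nf

end RandomImage

section TypicalFamily

lemma choose_le_sub_choose_add (n m : ℕ) :
    ∀ κ ≤ n, n.choose (m + 1) ≤ (n - κ).choose (m + 1) + κ * (n - 1).choose m
  | 0, _ => by simp
  | κ + 1, h => by
    have ih := choose_le_sub_choose_add n m κ (by lia)
    rw [show n - κ = n - (κ + 1) + 1 by lia, Nat.choose_succ_succ'] at ih
    have hmono : (n - (κ + 1)).choose m ≤ (n - 1).choose m := Nat.choose_le_choose _ (by lia)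
    lia

lemma one_sub_mul_choose_le_sub_choose {n κ : ℕ} (m : ℕ) (hn : 0 < n) (h : κ ≤ n) :
    (1 - κ * m / n : ℝ) * n.choose m ≤ (n - κ).choose m := by
  obtain _ | m := m
  · simp
  have : (0 : ℝ) < n := Nat.cast_pos.mpr hn
  have hdiff : (n.choose (m + 1) : ℝ) ≤ (n - κ).choose (m + 1) + κ * (n - 1).choose m := by
    exact_mod_cast choose_le_sub_choose_add n m κ h
  have habsorb : (n : ℝ) * (n - 1).choose m = n.choose (m + 1) * (m + 1) := by
    obtain ⟨n, rfl⟩ := Nat.exists_eq_succ_of_ne_zero hn.ne'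
    exact_mod_cast Nat.add_one_mul_choose_eq n m
  rw [mul_comm, ← eq_div_iff (by positivity)] at habsorb
  calc (1 - κ * (m + 1 : ℕ) / n : ℝ) * n.choose (m + 1)
    _ = n.choose (m + 1) - κ * (n.choose (m + 1) * (m + 1) / n) := by push_cast; ring
    _ ≤ (n - κ).choose (m + 1) := by rw [← habsorb]; linarith

variable {n k κ c : ℕ} {H : Finset (Finset (Fin n))} {p ε : ℝ}

/-- The hypotheses on `κ`-sets in a `k`-uniform hypergraph, where `κ + c = k`: properties `R_a` and
`R_e` are the case `κ = k_X`, properties `R_b` and `R_f` the case `κ = k_Y`. -/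
structure HasRegularNbhds (k κ c : ℕ) (H : Finset (Finset (Fin n))) (p ε : ℝ) : Prop where
  degree (S : Finset (Fin n)) (hS : #S = κ) : (1 - ε) * (n - κ).choose c * p ≤ hDeg n k H S
  codegree (S₁ S₂ : Finset (Fin n)) (h₁ : #S₁ = κ) (h₂ : #S₂ = κ) (h : Disjoint S₁ S₂) :
    (#(hNbhd n k H S₁ ∩ hNbhd n k H S₂) : ℝ) ≤ (1 + ε) * (n - 2 * κ).choose c * p ^ 2

/-- The family `B` meets the neighbourhoods of `κ`-sets, and the common neighbourhoods of disjoint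
`κ`-sets, about as often as expected in a hypergraph of density `p`. -/
structure IsTypicalFamily {ι : Type*} [Fintype ι] (k κ : ℕ) (H : Finset (Finset (Fin n)))
    (p δ : ℝ) (B : ι → Finset (Fin n)) : Prop where
  degree (S : Finset (Fin n)) (hS : #S = κ) :
    (1 - δ) * (Fintype.card ι * p) ≤ #{i | B i ∈ hNbhd n k H S}
  codegree (S₁ S₂ : Finset (Fin n)) (h₁ : #S₁ = κ) (h₂ : #S₂ = κ) (h : Disjoint S₁ S₂) :
    (#{i | B i ∈ hNbhd n k H S₁ ∩ hNbhd n k H S₂} : ℝ) ≤ (1 + δ) * (Fintype.card ι * p ^ 2)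

lemma card_of_mem_hNbhd (hk : κ + c = k) {S W : Finset (Fin n)} (hS : #S = κ)
    (hW : W ∈ hNbhd n k H S) : #W = c := by
  rw [hNbhd, mem_filter] at hW
  lia

lemma card_add_card_disjoint_pairs_le (hn : 0 < n) (hκ : κ ≤ k) :
    #(powersetCard κ (univ : Finset (Fin n))) +
      #{q ∈ powersetCard κ (univ : Finset (Fin n)) ×ˢ powersetCard κ univ | Disjoint q.1 q.2} ≤
      2 * n ^ (2 * k) := by
  have hsingle : #(powersetCard κ (univ : Finset (Fin n))) ≤ n ^ k := by
    rw [card_powersetCard, card_fin]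
    exact (Nat.choose_le_pow n κ).trans (Nat.pow_le_pow_right hn hκ)
  rw [two_mul, two_mul k]
  refine add_le_add (hsingle.trans (Nat.pow_le_pow_right hn (by lia))) ?_
  rw [pow_add]
  exact (card_filter_le _ _).trans ((card_product _ _).trans_le (Nat.mul_le_mul hsingle hsingle))

namespace HasRegularNbhds

variable {S S₁ S₂ : Finset (Fin n)}

lemma le_hDeg_div_choose (hH : HasRegularNbhds k κ c H p ε) (hk : κ + c = k) (hkn : k ≤ n)
    (hn : 0 < n) (hp : 0 ≤ p) (hε : ε ≤ 1) (hsmall : (k : ℝ) ^ 2 ≤ ε * n) (hS : #S = κ) :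
    (1 - 2 * ε) * p ≤ hDeg n k H S / n.choose c := by
  have hn' : (0 : ℝ) < n := Nat.cast_pos.mpr hn
  have hC : (0 : ℝ) < n.choose c := Nat.cast_pos.mpr (Nat.choose_pos (by lia))
  have hratio := one_sub_mul_choose_le_sub_choose c hn (show κ ≤ n by lia)
  have hloss : (κ * c / n : ℝ) ≤ ε := by
    rw [div_le_iff₀ hn']
    refine le_trans ?_ hsmall
    rw [sq]
    exact_mod_cast Nat.mul_le_mul (show κ ≤ k by lia) (show c ≤ k by lia)
  rw [le_div_iff₀ hC]
  calc (1 - 2 * ε) * p * n.choose c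
    _ ≤ (1 - ε) * ((1 - ε) * n.choose c) * p := by
      have : 0 ≤ ε ^ 2 * (p * n.choose c) := by positivity
      linarith
    _ ≤ (1 - ε) * ((1 - κ * c / n) * n.choose c) * p := by gcongr
    _ ≤ (1 - ε) * (n - κ).choose c * p := by gcongr
    _ ≤ hDeg n k H S := hH.degree S hS

variable {ι : Type*} [Fintype ι] {B : ι → Finset (Fin n)}

lemma prob_degree_lt_le (hH : HasRegularNbhds k κ c H p ε) (hk : κ + c = k) (hkn : k ≤ n)
    (hn : 0 < n) (hp₀ : 0 ≤ p) (hp₁ : p ≤ 1) (hε₀ : 0 ≤ ε) (hε₁ : ε ≤ 1)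
    (hsmall : (k : ℝ) ^ 2 ≤ ε * n) (hB : Pairwise fun i j ↦ Disjoint (B i) (B j))
    (hBc : ∀ i, #(B i) = c) (hS : #S = κ) :
    prob (fun σ : Equiv.Perm (Fin n) ↦
      (#{i | (B i).image σ ∈ hNbhd n k H S} : ℝ) < (1 - 3 * ε) * (Fintype.card ι * p)) ≤
      Real.exp (-((ε * (Fintype.card ι * p ^ 2)) ^ 2 / (32 * n))) := by
  have hmean := hH.le_hDeg_div_choose hk hkn hn hp₀ hε₁ hsmall hS
  refine (prob_mono fun σ hσ ↦ ?_).trans (prob_card_image_mem_le_sub hn hB hBc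
    (fun _ ↦ card_of_mem_hNbhd hk hS) (by positivity)
    (mul_le_mul_of_nonneg_left hmean (Nat.cast_nonneg _)))
  have hpp : ε * (Fintype.card ι * p ^ 2) ≤ ε * (Fintype.card ι * p) := by
    gcongr
    exact pow_le_of_le_one hp₀ hp₁ two_ne_zero
  linarith

lemma prob_codegree_gt_le (hH : HasRegularNbhds k κ c H p ε) (hk : κ + c = k) (hkn : k ≤ n)
    (hn : 0 < n) (hε₀ : 0 ≤ ε) (hB : Pairwise fun i j ↦ Disjoint (B i) (B j))
    (hBc : ∀ i, #(B i) = c) (h₁ : #S₁ = κ) (h₂ : #S₂ = κ) (h : Disjoint S₁ S₂) :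
    prob (fun σ : Equiv.Perm (Fin n) ↦ (1 + 2 * ε) * (Fintype.card ι * p ^ 2) <
      #{i | (B i).image σ ∈ hNbhd n k H S₁ ∩ hNbhd n k H S₂}) ≤
      Real.exp (-((ε * (Fintype.card ι * p ^ 2)) ^ 2 / (32 * n))) := by
  have hC : (0 : ℝ) < n.choose c := Nat.cast_pos.mpr (Nat.choose_pos (by lia))
  have hmean : (#(hNbhd n k H S₁ ∩ hNbhd n k H S₂) / n.choose c : ℝ) ≤ (1 + ε) * p ^ 2 := by
    rw [div_le_iff₀ hC]
    calc (#(hNbhd n k H S₁ ∩ hNbhd n k H S₂) : ℝ)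
      _ ≤ (1 + ε) * (n - 2 * κ).choose c * p ^ 2 := hH.codegree S₁ S₂ h₁ h₂ h
      _ ≤ (1 + ε) * n.choose c * p ^ 2 := by
        gcongr
        exact Nat.sub_le _ _
      _ = (1 + ε) * p ^ 2 * n.choose c := by ring
  refine (prob_mono fun σ hσ ↦ ?_).trans (prob_add_le_card_image_mem hn hB hBc
    (fun W hW ↦ card_of_mem_hNbhd hk h₁ (mem_inter.mp hW).1) (by positivity)
    (mul_le_mul_of_nonneg_left hmean (Nat.cast_nonneg _)))
  linarith

lemma prob_not_isTypicalFamily_le (hH : HasRegularNbhds k κ c H p ε) (hk : κ + c = k)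
    (hkn : k ≤ n) (hn : 0 < n) (hp₀ : 0 ≤ p) (hp₁ : p ≤ 1) (hε₀ : 0 ≤ ε) (hε₁ : ε ≤ 1)
    (hsmall : (k : ℝ) ^ 2 ≤ ε * n) (hB : Pairwise fun i j ↦ Disjoint (B i) (B j))
    (hBc : ∀ i, #(B i) = c) :
    prob (fun σ : Equiv.Perm (Fin n) ↦
      ¬ IsTypicalFamily k κ H p (3 * ε) fun i ↦ (B i).image σ) ≤
      2 * n ^ (2 * k) * Real.exp (-((ε * (Fintype.card ι * p ^ 2)) ^ 2 / (32 * n))) := by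
  set E := Real.exp (-((ε * (Fintype.card ι * p ^ 2)) ^ 2 / (32 * n)))
  let single := powersetCard κ (univ : Finset (Fin n))
  let pairs := {q ∈ single ×ˢ single | Disjoint q.1 q.2}
  calc prob (fun σ : Equiv.Perm (Fin n) ↦
        ¬ IsTypicalFamily k κ H p (3 * ε) fun i ↦ (B i).image σ)
    _ ≤ prob (fun σ : Equiv.Perm (Fin n) ↦
          (∃ S ∈ single, (#{i | (B i).image σ ∈ hNbhd n k H S} : ℝ) <
            (1 - 3 * ε) * (Fintype.card ι * p)) ∨
          ∃ q ∈ pairs, (1 + 2 * ε) * (Fintype.card ι * p ^ 2) <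
            #{i | (B i).image σ ∈ hNbhd n k H q.1 ∩ hNbhd n k H q.2}) := by
      refine prob_mono fun σ hσ ↦ ?_
      by_contra! hgood
      refine hσ ⟨fun S hS ↦ hgood.1 S (mem_powersetCard_univ.mpr hS), fun S₁ S₂ h₁ h₂ h ↦ ?_⟩
      refine (hgood.2 (S₁, S₂) (by simp [pairs, single, *])).trans ?_
      gcongr
      norm_num
    _ ≤ ∑ _ ∈ single, E + ∑ _ ∈ pairs, E := by
      refine (prob_or_le _ _).trans (add_le_add ((prob_exists_le _ _).trans (sum_le_sum ?_))
        ((prob_exists_le _ _).trans (sum_le_sum ?_)))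
      · exact fun S hS ↦ hH.prob_degree_lt_le hk hkn hn hp₀ hp₁ hε₀ hε₁ hsmall hB hBc
          (mem_powersetCard_univ.mp hS)
      · simp only [pairs, single, mem_filter, mem_product, mem_powersetCard_univ]
        exact fun q hq ↦ hH.prob_codegree_gt_le hk hkn hn hε₀ hB hBc hq.1.1 hq.1.2 hq.2
    _ = ((#single + #pairs : ℕ) : ℝ) * E := by
      rw [sum_const, sum_const, nsmul_eq_mul, nsmul_eq_mul, Nat.cast_add, add_mul]
    _ ≤ 2 * n ^ (2 * k) * E := by
      gcongr
      exact_mod_cast card_add_card_disjoint_pairs_le hn (show κ ≤ k by lia)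

end HasRegularNbhds

end TypicalFamily

section BlockPartition

/-- A partition of `Fin n` into left blocks of size `κ` and right blocks of size `c`, both indexed
by `V`. With `κ = k_X` and `c = k_Y`, a left and a right block together can form an edge of a
`k`-uniform hypergraph. -/
structure BlockPartition (n : ℕ) (V : Type*) (κ c : ℕ) where
  left : V → Finset (Fin n)
  right : V → Finset (Fin n)
  card_left (a : V) : #(left a) = κ
  card_right (b : V) : #(right b) = c
  pairwise_left : Pairwise fun a a' ↦ Disjoint (left a) (left a')
  pairwise_right : Pairwise fun b b' ↦ Disjoint (right b) (right b')
  disjoint_left_right (a b : V) : Disjoint (left a) (right b)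
  exists_mem (x : Fin n) : (∃ a, x ∈ left a) ∨ ∃ b, x ∈ right b

namespace BlockPartition

variable {n k κ c : ℕ} {V : Type*}

/-- The image of a block partition under a permutation of the vertices. -/
def map (B : BlockPartition n V κ c) (σ : Equiv.Perm (Fin n)) : BlockPartition n V κ c where
  left a := (B.left a).image σ
  right b := (B.right b).image σ
  card_left a := by rw [card_image_of_injective _ σ.injective, B.card_left]
  card_right b := by rw [card_image_of_injective _ σ.injective, B.card_right]
  pairwise_left _ _ h := (disjoint_image σ.injective).mpr (B.pairwise_left h)
  pairwise_right _ _ h := (disjoint_image σ.injective).mpr (B.pairwise_right h)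
  disjoint_left_right a b := (disjoint_image σ.injective).mpr (B.disjoint_left_right a b)
  exists_mem x := (B.exists_mem (σ.symm x)).imp
    (fun ⟨a, ha⟩ ↦ ⟨a, mem_image.mpr ⟨_, ha, σ.apply_symm_apply x⟩⟩)
    (fun ⟨b, hb⟩ ↦ ⟨b, mem_image.mpr ⟨_, hb, σ.apply_symm_apply x⟩⟩)

/-- The potential hypergraph edge formed by a left block and a right block. -/
def edge (B : BlockPartition n V κ c) (x : V × V) : Finset (Fin n) := B.left x.1 ∪ B.right x.2

lemma edge_map (B : BlockPartition n V κ c) (σ : Equiv.Perm (Fin n)) (x : V × V) :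
    (B.map σ).edge x = (B.edge x).image σ :=
  (image_union _ _).symm

lemma card_edge (B : BlockPartition n V κ c) (x : V × V) : #(B.edge x) = κ + c := by
  rw [edge, card_union_of_disjoint (B.disjoint_left_right _ _), B.card_left, B.card_right]

lemma disjoint_edge (B : BlockPartition n V κ c) {x y : V × V} (h₁ : x.1 ≠ y.1)
    (h₂ : x.2 ≠ y.2) : Disjoint (B.edge x) (B.edge y) := by
  simp only [edge, disjoint_union_left, disjoint_union_right]
  exact ⟨⟨B.pairwise_left h₁, (B.disjoint_left_right _ _).symm⟩,
    B.disjoint_left_right _ _, B.pairwise_right h₂⟩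

lemma edge_injective (B : BlockPartition n V κ c) (hκ : 0 < κ) (hc : 0 < c) :
    Function.Injective B.edge := by
  intro x y h
  obtain ⟨u, hu⟩ := card_pos.mp (hκ.trans_eq (B.card_left x.1).symm)
  obtain ⟨v, hv⟩ := card_pos.mp (hc.trans_eq (B.card_right x.2).symm)
  have hu' : u ∈ B.edge y := h ▸ mem_union_left _ hu
  have hv' : v ∈ B.edge y := h ▸ mem_union_right _ hv
  ext
  · by_contra hne
    rcases mem_union.mp hu' with hy | hy
    · exact disjoint_left.mp (B.pairwise_left hne) hu hy
    · exact disjoint_left.mp (B.disjoint_left_right _ _) hu hy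
  · by_contra hne
    rcases mem_union.mp hv' with hy | hy
    · exact disjoint_left.mp (B.disjoint_left_right _ _) hy hv
    · exact disjoint_left.mp (B.pairwise_right hne) hv hy

variable [Fintype V]

lemma card_sq_le_choose (B : BlockPartition n V κ c) (hκ : 0 < κ) (hc : 0 < c) :
    Fintype.card V ^ 2 ≤ n.choose (κ + c) := by
  calc Fintype.card V ^ 2
    _ = #(univ.map ⟨B.edge, B.edge_injective hκ hc⟩) := by
      rw [card_map, card_univ, Fintype.card_prod, sq]
    _ ≤ #(powersetCard (κ + c) (univ : Finset (Fin n))) := by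
      refine card_le_card fun e he ↦ ?_
      obtain ⟨x, -, rfl⟩ := mem_map.mp he
      exact mem_powersetCard_univ.mpr (B.card_edge x)
    _ = n.choose (κ + c) := by rw [card_powersetCard, card_fin]

/-- The bipartite graph of those pairs of blocks that form an edge of `H`. -/
def graph (B : BlockPartition n V κ c) (H : Finset (Finset (Fin n))) : Finset (V × V) :=
  {x | B.edge x ∈ H}

variable {H : Finset (Finset (Fin n))}

lemma mem_graph {B : BlockPartition n V κ c} {x : V × V} : x ∈ B.graph H ↔ B.edge x ∈ H :=
  mem_filter_univ x

lemma right_mem_hNbhd_left (B : BlockPartition n V κ c) (hk : κ + c = k) (a b : V) :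
    B.right b ∈ hNbhd n k H (B.left a) ↔ (a, b) ∈ B.graph H := by
  rw [mem_graph, edge, hNbhd, mem_filter_univ, B.card_left, B.card_right]
  exact and_iff_right (by lia)

lemma left_mem_hNbhd_right (B : BlockPartition n V κ c) (hk : κ + c = k) (a b : V) :
    B.left a ∈ hNbhd n k H (B.right b) ↔ (a, b) ∈ B.graph H := by
  rw [mem_graph, edge, hNbhd, mem_filter_univ, B.card_left, B.card_right, union_comm]
  exact and_iff_right (by lia)

/-- Each side of the block partition meets the neighbourhoods of the sets of the size of the other
side's blocks about as often as expected. -/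
structure IsTypical (B : BlockPartition n V κ c) (k : ℕ) (H : Finset (Finset (Fin n)))
    (p δ : ℝ) : Prop where
  right : IsTypicalFamily k κ H p δ B.right
  left : IsTypicalFamily k c H p δ B.left

lemma IsTypical.isPseudorandom_graph [DecidableEq V] {p δ : ℝ} {B : BlockPartition n V κ c}
    (hB : B.IsTypical k H p δ) (hk : κ + c = k) : IsPseudorandom p δ (B.graph H) where
  left_degree a := by
    simpa only [B.right_mem_hNbhd_left hk, edgeCount_singleton_left]
      using hB.right.degree _ (B.card_left a)
  right_degree b := by
    simpa only [B.left_mem_hNbhd_right hk, edgeCount_singleton_right]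
      using hB.left.degree _ (B.card_right b)
  left_codegree a a' h := by
    simpa only [mem_inter, B.right_mem_hNbhd_left hk]
      using hB.right.codegree _ _ (B.card_left a) (B.card_left a') (B.pairwise_left h)
  right_codegree b b' h := by
    simpa only [mem_inter, B.left_mem_hNbhd_right hk]
      using hB.left.codegree _ _ (B.card_right b) (B.card_right b') (B.pairwise_right h)

/-- The hypergraph matching that pairs each left block `a` with the right block `π a`. -/
def matching (B : BlockPartition n V κ c) (π : Equiv.Perm V) : Finset (Finset (Fin n)) :=
  univ.image fun a ↦ B.edge (a, π a)

lemma mem_matching {B : BlockPartition n V κ c} {π : Equiv.Perm V} {e : Finset (Fin n)} :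
    e ∈ B.matching π ↔ ∃ a, B.edge (a, π a) = e := by
  simp only [matching, mem_image, mem_univ, true_and]

lemma isHypPerfectMatching_matching (B : BlockPartition n V κ c) (hκ : 0 < κ) (hc : 0 < c)
    (hk : κ + c = k) (hn : n = k * Fintype.card V) {π : Equiv.Perm V}
    (hπ : ∀ a, (a, π a) ∈ B.graph H) : IsHypPerfectMatching n k H (B.matching π) := by
  refine ⟨fun e he ↦ ?_, ?_, fun e he e' he' hne ↦ ?_, eq_univ_iff_forall.mpr fun x ↦ ?_⟩
  · obtain ⟨a, rfl⟩ := mem_matching.mp he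
    exact mem_graph.mp (hπ a)
  · have hinj : Function.Injective fun a ↦ B.edge (a, π a) :=
      fun a b h ↦ congrArg Prod.fst (B.edge_injective hκ hc h)
    rw [matching, card_image_of_injective _ hinj, hn, Nat.mul_div_cancel_left _ (by lia), card_univ]
  · obtain ⟨a, rfl⟩ := mem_matching.mp he
    obtain ⟨b, rfl⟩ := mem_matching.mp he'
    have hab : a ≠ b := fun h ↦ hne (h ▸ rfl)
    exact B.disjoint_edge hab (π.injective.ne hab)
  · rw [mem_biUnion]
    rcases B.exists_mem x with ⟨a, ha⟩ | ⟨b, hb⟩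
    · exact ⟨_, mem_matching.mpr ⟨a, rfl⟩, mem_union_left _ ha⟩
    · refine ⟨_, mem_matching.mpr ⟨π.symm b, rfl⟩, mem_union_right _ ?_⟩
      rwa [π.apply_symm_apply]

end BlockPartition

lemma nonempty_blockPartition (κ c ν : ℕ) :
    Nonempty (BlockPartition ((κ + c) * ν) (Fin ν) κ c) := by
  let e : (Fin κ ⊕ Fin c) × Fin ν ≃ Fin ((κ + c) * ν) :=
    (finSumFinEquiv.prodCongr (Equiv.refl _)).trans finProdFinEquiv
  have hcard {m : ℕ} {f : Fin m → Fin κ ⊕ Fin c} (hf : f.Injective) (a : Fin ν) :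
      #(univ.image fun i ↦ e (f i, a)) = m := by
    rw [card_image_of_injective _ fun i j h ↦ hf (congrArg Prod.fst (e.injective h)), card_fin]
  have hdisjoint {m m' : ℕ} {f : Fin m → Fin κ ⊕ Fin c} {g : Fin m' → Fin κ ⊕ Fin c}
      {a b : Fin ν} (h : ∀ i j, (f i, a) ≠ (g j, b)) :
      Disjoint (univ.image fun i ↦ e (f i, a)) (univ.image fun j ↦ e (g j, b)) := by
    simpa [disjoint_left, e.injective.eq_iff]
      using fun i j hij hab ↦ h i j (Prod.ext hij.symm hab.symm)
  refine ⟨⟨fun a ↦ univ.image fun i ↦ e (Sum.inl i, a),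
    fun b ↦ univ.image fun j ↦ e (Sum.inr j, b),
    hcard Sum.inl_injective, hcard Sum.inr_injective, fun a a' h ↦ hdisjoint (by simp [h]),
    fun b b' h ↦ hdisjoint (by simp [h]), fun a b ↦ hdisjoint (by simp), fun x ↦ ?_⟩⟩
  obtain ⟨⟨i | j, a⟩, rfl⟩ := e.surjective x
  · exact Or.inl ⟨a, mem_image_of_mem _ (mem_univ i)⟩
  · exact Or.inr ⟨a, mem_image_of_mem _ (mem_univ j)⟩

lemma sq_le_choose_mul {k : ℕ} (hk : 2 ≤ k) (ν : ℕ) : ν ^ 2 ≤ (k * ν).choose k := by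
  obtain ⟨B⟩ := nonempty_blockPartition 1 (k - 1) ν
  have h := B.card_sq_le_choose one_pos (by lia)
  rwa [Fintype.card_fin, Nat.add_sub_of_le (by lia)] at h

end BlockPartition

section Splitting

variable {V β : Type*} [DecidableEq V] {M : ℕ}

/-- The random subgraph of `G` consisting of the edges `x` whose name `f x` receives under the
random colouring `c` exactly the colour `l (f x)`. -/
def sampledGraph (f : V × V → β) (l c : β → Fin M) (G : Finset (V × V)) : Finset (V × V) :=
  {x ∈ G | c (f x) = l (f x)}

variable {f : V × V → β} {G : Finset (V × V)} {η d L : ℝ}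

lemma prob_edgeCount_sampledGraph_le [Fintype β] [DecidableEq β] (hf : f.Injective)
    (l : β → Fin M) [NeZero M] (hη₀ : 0 ≤ η) (hη₁ : η ≤ 1) (S T : Finset V) :
    prob (fun c : β → Fin M ↦
      (edgeCount (sampledGraph f l c G) S T : ℝ) ≤ (1 - η) * (edgeCount G S T / M)) ≤
      Real.exp (-(η ^ 2 * (edgeCount G S T / M) / 4)) := by
  let E := {x ∈ G | x.1 ∈ S ∧ x.2 ∈ T}.image f
  have hcount (c : β → Fin M) :
      edgeCount (sampledGraph f l c G) S T = #{e | e ∈ E ∧ c e = l e} := by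
    rw [← filter_filter, filter_univ_mem, filter_image, card_image_of_injective _ hf, edgeCount,
      sampledGraph, filter_comm]
  have hprob (e : β) : prob (fun m : Fin M ↦ e ∈ E ∧ m = l e) =
      if e ∈ E then (1 / M : ℝ) else 0 := by
    rw [prob_eq_card_div, Fintype.card_fin]
    split_ifs with he <;> simp [he, Finset.filter_eq']
  have hmean : ∑ e, prob (fun m : Fin M ↦ e ∈ E ∧ m = l e) = edgeCount G S T / M := by
    rw [sum_congr rfl fun e _ ↦ hprob e, ← sum_filter, filter_univ_mem, sum_const,
      card_image_of_injective _ hf, nsmul_eq_mul, mul_one_div, edgeCount]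
  have hchernoff := prob_card_le_le (fun e (m : Fin M) ↦ e ∈ E ∧ m = l e) hη₀ hη₁
  rw [hmean] at hchernoff
  simpa only [hcount] using hchernoff

variable [Fintype V]

/-- Lower bounds on the number of edges across the cuts of a balanced bipartite graph. The first
one controls the failure probability of a cut under sampling, the second one is the main term in
the cut condition. -/
structure HasLargeCuts (d L : ℝ) (G : Finset (V × V)) : Prop where
  le_min {S T : Finset V} (h : Fintype.card V < #S + #T) :
    d * (min #S #T : ℕ) / 8 ≤ edgeCount G S T
  le_excess {S T : Finset V} (h : Fintype.card V < #S + #T) :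
    L * (#S + #T - Fintype.card V) ≤ edgeCount G S T

lemma HasLargeCuts.prob_exists_cut_le [Fintype β] [DecidableEq β] (hG : HasLargeCuts d L G)
    (hf : f.Injective) (l : β → Fin M) [NeZero M] (hη₀ : 0 ≤ η) (hη₁ : η ≤ 1) (hd : 0 ≤ d)
    (hsmall : Fintype.card V * Real.exp (-(η ^ 2 * d / (64 * M))) ≤ 1) :
    prob (fun c : β → Fin M ↦ ∃ S T : Finset V, Fintype.card V < #S + #T ∧
      (edgeCount (sampledGraph f l c G) S T : ℝ) ≤ (1 - η) * (edgeCount G S T / M)) ≤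
      12 * (Fintype.card V * Real.exp (-(η ^ 2 * d / (64 * M)))) := by
  rw [show η ^ 2 * d / (64 * M) = η ^ 2 * d / (32 * M) / 2 by ring] at hsmall ⊢
  refine le_trans ?_ (sum_exp_neg_mul_min_card_le (by positivity) hsmall)
  calc prob (fun c : β → Fin M ↦ ∃ S T : Finset V, Fintype.card V < #S + #T ∧
        (edgeCount (sampledGraph f l c G) S T : ℝ) ≤ (1 - η) * (edgeCount G S T / M))
    _ ≤ prob fun c : β → Fin M ↦
        ∃ q ∈ univ.filter fun q : Finset V × Finset V ↦ Fintype.card V < #q.1 + #q.2,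
        (edgeCount (sampledGraph f l c G) q.1 q.2 : ℝ) ≤ (1 - η) * (edgeCount G q.1 q.2 / M) :=
      prob_mono fun c ⟨S, T, hST, hc⟩ ↦ ⟨(S, T), (mem_filter_univ _).mpr hST, hc⟩
    _ ≤ ∑ q : Finset V × Finset V with Fintype.card V < #q.1 + #q.2,
        Real.exp (-(η ^ 2 * (edgeCount G q.1 q.2 / M) / 4)) :=
      (prob_exists_le _ _).trans
        (sum_le_sum fun q _ ↦ prob_edgeCount_sampledGraph_le hf l hη₀ hη₁ q.1 q.2)
    _ ≤ ∑ q : Finset V × Finset V with Fintype.card V < #q.1 + #q.2,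
        Real.exp (-(η ^ 2 * d / (32 * M) * (min #q.1 #q.2 : ℕ))) := by
      refine sum_le_sum fun q hq ↦ Real.exp_le_exp.mpr (neg_le_neg ?_)
      calc η ^ 2 * d / (32 * M) * (min #q.1 #q.2 : ℕ)
        _ = η ^ 2 * (d * (min #q.1 #q.2 : ℕ) / 8 / M) / 4 := by ring
        _ ≤ η ^ 2 * (edgeCount G q.1 q.2 / M) / 4 := by
          have := hG.le_min ((mem_filter_univ q).mp hq)
          gcongr

lemma CutCondition.of_edgeCount_le {F : Finset (V × V)} {r : ℕ} (hG : HasLargeCuts d L G)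
    (hη : η ≤ 1) (hr : r ≤ (1 - η) * L / M)
    (hF : ∀ S T : Finset V, Fintype.card V < #S + #T →
      (1 - η) * (edgeCount G S T / M) ≤ edgeCount F S T) : CutCondition r F := by
  intro S T
  obtain h | h := le_or_gt (#S + #T) (Fintype.card V)
  · exact le_add_left (Nat.mul_le_mul_left r h)
  have hexcess : (0 : ℝ) ≤ #S + #T - Fintype.card V := by
    rw [sub_nonneg]
    exact_mod_cast h.le
  have hcut : (r : ℝ) * (#S + #T - Fintype.card V) ≤ edgeCount F S T :=
    calc (r : ℝ) * (#S + #T - Fintype.card V)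
      _ ≤ (1 - η) * L / M * (#S + #T - Fintype.card V) := by gcongr
      _ = (1 - η) * (L * (#S + #T - Fintype.card V) / M) := by ring
      _ ≤ (1 - η) * (edgeCount G S T / M) := by
        have := hG.le_excess h
        have : 0 ≤ 1 - η := sub_nonneg.mpr hη
        gcongr
      _ ≤ edgeCount F S T := hF S T h
  have : (r : ℝ) * (#S + #T) ≤ edgeCount F S T + r * Fintype.card V := by linarith
  exact_mod_cast this

lemma exists_injOn_fin {ι : Type*} {s : Finset ι} [NeZero M] (h : #s ≤ M) :
    ∃ g : ι → Fin M, Set.InjOn g s := by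
  classical
  obtain ⟨φ⟩ := Function.Embedding.nonempty_of_card_le (α := s) (β := Fin M) (by simpa using h)
  refine ⟨fun i ↦ if hi : i ∈ s then φ ⟨i, hi⟩ else 0, fun i hi j hj hij ↦ ?_⟩
  simp only [dif_pos (mem_coe.mp hi), dif_pos (mem_coe.mp hj)] at hij
  exact congrArg Subtype.val (φ.injective hij)

variable {ι : Type*} [Fintype ι] {f : ι → V × V → β} {G : ι → Finset (V × V)}

lemma exists_cutCondition_sampledGraph [Finite β] [NeZero M] {r : ℕ}
    (hG : ∀ i, HasLargeCuts d L (G i)) (hf : ∀ i, (f i).Injective) (l : ι → β → Fin M)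
    (hη₀ : 0 ≤ η) (hη₁ : η ≤ 1) (hd : 0 ≤ d)
    (hsmall : Fintype.card ι *
      (12 * (Fintype.card V * Real.exp (-(η ^ 2 * d / (64 * M))))) < 1)
    (hr : r ≤ (1 - η) * L / M) :
    ∃ c : β → Fin M, ∀ i, CutCondition r (sampledGraph (f i) (l i) c (G i)) := by
  classical
  cases nonempty_fintype β
  cases isEmpty_or_nonempty ι
  · exact ⟨0, isEmptyElim⟩
  have hι : (1 : ℝ) ≤ Fintype.card ι := Nat.one_le_cast.mpr Fintype.card_pos
  set ξ := Fintype.card V * Real.exp (-(η ^ 2 * d / (64 * M)))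
  have : 0 ≤ ξ := by positivity
  have hξ₁ : ξ ≤ 1 := by linarith [le_mul_of_one_le_left (show 0 ≤ 12 * ξ by positivity) hι]
  obtain ⟨c, hc⟩ := exists_forall_not_of_sum_prob_lt_one univ
    (fun i (c : β → Fin M) ↦ ∃ S T : Finset V, Fintype.card V < #S + #T ∧
      (edgeCount (sampledGraph (f i) (l i) c (G i)) S T : ℝ) ≤
        (1 - η) * (edgeCount (G i) S T / M))
    (calc _ ≤ ∑ _ : ι, 12 * ξ := sum_le_sum fun i _ ↦
            (hG i).prob_exists_cut_le (hf i) (l i) hη₀ hη₁ hd hξ₁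
          _ < 1 := by rwa [sum_const, card_univ, nsmul_eq_mul])
  refine ⟨c, fun i ↦ .of_edgeCount_le (hG i) hη₁ hr fun S T hST ↦ ?_⟩
  by_contra! hlt
  exact hc i (mem_univ i) ⟨S, T, hST, hlt.le⟩

/-- A name stands for a hypergraph edge, which may occur in several of the graphs `G i`. -/
lemma exists_perms_of_hasLargeCuts [Finite β] [DecidableEq β] [NeZero M] {r : ℕ}
    (hG : ∀ i, HasLargeCuts d L (G i)) (hf : ∀ i, (f i).Injective)
    (hM : ∀ e, #{i | ∃ x ∈ G i, f i x = e} ≤ M)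
    (hη₀ : 0 ≤ η) (hη₁ : η ≤ 1) (hd : 0 ≤ d)
    (hsmall : Fintype.card ι *
      (12 * (Fintype.card V * Real.exp (-(η ^ 2 * d / (64 * M))))) < 1)
    (hr : r ≤ (1 - η) * L / M) :
    ∃ π : ι → Fin r → Equiv.Perm V, (∀ i j a, (a, π i j a) ∈ G i) ∧
      Pairwise fun q q' : ι × Fin r ↦
        ∀ a a', f q.1 (a, π q.1 q.2 a) ≠ f q'.1 (a', π q'.1 q'.2 a') := by
  classical
  choose l hl using fun e ↦ exists_injOn_fin (hM e)
  obtain ⟨c, hc⟩ := exists_cutCondition_sampledGraph hG hf (fun i e ↦ l e i) hη₀ hη₁ hd hsmall hr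
  choose π hπ hdisj using fun i ↦ (hc i).exists_perms
  have hmem (i j a) : (a, π i j a) ∈ G i := (mem_filter.mp (hπ i j a)).1
  have hlabel (i j a) : c (f i (a, π i j a)) = l (f i (a, π i j a)) i :=
    (mem_filter.mp (hπ i j a)).2
  refine ⟨π, hmem, fun ⟨i, j⟩ ⟨i', j'⟩ hne a a' heq ↦ ?_⟩
  obtain rfl : i = i' := by
    refine hl (f i (a, π i j a)) ?_ ?_ ?_
    · exact mem_filter_univ i |>.mpr ⟨_, hmem i j a, rfl⟩
    · exact mem_filter_univ i' |>.mpr ⟨_, hmem i' j' a', heq.symm⟩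
    · exact (hlabel i j a).symm.trans ((congrArg c heq).trans
        ((hlabel i' j' a').trans (congrArg (l · i') heq.symm)))
  obtain ⟨rfl, h⟩ := Prod.ext_iff.mp (hf i heq)
  exact hdisj i (fun hj ↦ hne (congrArg _ hj)) a h

end Splitting

section RandomPartitions

/-- The conditional probability of `A e` given `Good` is at most `q / (1 - ε)`, and the counts
over independent choices of good outcomes are concentrated. -/
lemma exists_forall_card_le {Ω β ι : Type*} [Fintype Ω] [Fintype ι] {Good : Ω → Prop}
    {A : β → Ω → Prop} [∀ e, DecidablePred (A e)] {s : Finset β} {ε η q : ℝ} {M : ℕ}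
    (hgood : 1 - ε ≤ prob Good) (hε : ε < 1) (hA : ∀ e ∈ s, prob (A e) ≤ q) (hη₀ : 0 ≤ η)
    (hη₁ : η ≤ 1) (hq : Fintype.card ι * q ≤ (1 - η) * (1 - ε) * M)
    (hs : #s * Real.exp (-(η ^ 2 * M / 4)) < 1) :
    ∃ f : ι → Ω, (∀ i, Good (f i)) ∧ ∀ e ∈ s, #{i | A e (f i)} ≤ M := by
  classical
  have hpos : 0 < prob Good := (sub_pos.mpr hε).trans_le hgood
  have : Nonempty {ω // Good ω} := by
    by_contra! h
    have hnot (ω : Ω) : ¬Good ω := fun hω ↦ h.false ⟨ω, hω⟩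
    simp [prob, hnot] at hpos
  have hmean (e) (he : e ∈ s) :
      ∑ _ : ι, prob (fun ω : {ω // Good ω} ↦ A e ω) ≤ (1 - η) * M := by
    rw [sum_const, card_univ, nsmul_eq_mul]
    refine le_of_mul_le_mul_left ?_ hpos
    calc prob Good * (Fintype.card ι * prob fun ω : {ω // Good ω} ↦ A e ω)
      _ = Fintype.card ι * prob fun ω ↦ Good ω ∧ A e ω := by
        rw [prob_and_eq_mul_prob_subtype]
        ring
      _ ≤ Fintype.card ι * q := by
        have := (prob_mono fun ω (h : Good ω ∧ A e ω) ↦ h.2).trans (hA e he)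
        gcongr
      _ ≤ (1 - ε) * ((1 - η) * M) := by linarith
      _ ≤ prob Good * ((1 - η) * M) := by
        have : 0 ≤ 1 - η := sub_nonneg.mpr hη₁
        gcongr
  obtain ⟨f, hf⟩ := exists_forall_not_of_sum_prob_lt_one s
    (fun e (f : ι → {ω // Good ω}) ↦ (M : ℝ) ≤ #{i | A e (f i)})
    (calc _ ≤ ∑ _ ∈ s, Real.exp (-(η ^ 2 * M / 4)) := sum_le_sum fun e he ↦
            prob_le_card_le (fun _ (ω : {ω // Good ω}) ↦ A e ω) hη₀ hη₁ M.cast_nonneg (hmean e he)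
          _ < 1 := by rwa [sum_const, nsmul_eq_mul])
  refine ⟨fun i ↦ f i, fun i ↦ (f i).2, fun e he ↦ ?_⟩
  exact_mod_cast (not_le.mp (hf e he)).le

lemma IsPseudorandom.hasLargeCuts {V : Type*} [Fintype V] [DecidableEq V] {p δ : ℝ}
    {G : Finset (V × V)} (hG : IsPseudorandom p δ G) (hp : 0 < p) (hδ₀ : 0 ≤ δ) (hδ : δ ≤ 1 / 20)
    (hsqrt : √(Fintype.card V) ≤ δ * (Fintype.card V * p)) :
    HasLargeCuts (Fintype.card V * p) ((1 - 5 * δ) * (Fintype.card V * p)) G where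
  le_min h := (hG.cut_bounds hp hδ₀ hδ hsqrt h.le).1
  le_excess h := (hG.cut_bounds hp hδ₀ hδ hsqrt h.le).2

namespace BlockPartition

variable {n k κ c r M : ℕ} {V : Type*} [Fintype V] {H : Finset (Finset (Fin n))} {p ε η d L : ℝ}

lemma prob_not_isTypical_map_le (B : BlockPartition n V κ c) (hk : κ + c = k) (hkn : k ≤ n)
    (hn : 0 < n) (hleft : HasRegularNbhds k κ c H p ε) (hright : HasRegularNbhds k c κ H p ε)
    (hp₀ : 0 ≤ p) (hp₁ : p ≤ 1) (hε₀ : 0 ≤ ε) (hε₁ : ε ≤ 1) (hsmall : (k : ℝ) ^ 2 ≤ ε * n) :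
    prob (fun σ ↦ ¬(B.map σ).IsTypical k H p (3 * ε)) ≤
      4 * n ^ (2 * k) * Real.exp (-((ε * (Fintype.card V * p ^ 2)) ^ 2 / (32 * n))) := by
  have h₁ := hleft.prob_not_isTypicalFamily_le hk hkn hn hp₀ hp₁ hε₀ hε₁ hsmall
    B.pairwise_right B.card_right
  have h₂ := hright.prob_not_isTypicalFamily_le ((add_comm c κ).trans hk) hkn hn hp₀ hp₁ hε₀ hε₁
    hsmall B.pairwise_left B.card_left
  calc prob (fun σ ↦ ¬(B.map σ).IsTypical k H p (3 * ε))
    _ ≤ prob fun σ : Equiv.Perm (Fin n) ↦ ¬IsTypicalFamily k κ H p (3 * ε) (B.map σ).right ∨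
        ¬IsTypicalFamily k c H p (3 * ε) (B.map σ).left :=
      prob_mono fun σ h ↦ not_and_or.mp fun h' ↦ h ⟨h'.1, h'.2⟩
    _ ≤ _ := prob_or_le _ _
    _ ≤ _ := add_le_add h₁ h₂
    _ = _ := by ring

lemma prob_exists_edge_map_eq_le (B : BlockPartition n V κ c) {e : Finset (Fin n)}
    (he : #e = κ + c) :
    prob (fun σ ↦ ∃ x, (B.map σ).edge x = e) ≤ Fintype.card V ^ 2 / n.choose (κ + c) := by
  have hedge (x : V × V) :
      prob (fun σ ↦ (B.map σ).edge x = e) = 1 / n.choose (κ + c) := by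
    simp only [edge_map]
    rw [prob_image_eq (he.trans (B.card_edge x).symm), B.card_edge, Fintype.card_fin]
  calc prob (fun σ ↦ ∃ x, (B.map σ).edge x = e)
    _ ≤ prob fun σ ↦ ∃ x ∈ univ, (B.map σ).edge x = e :=
      prob_mono fun σ ⟨x, hx⟩ ↦ ⟨x, mem_univ x, hx⟩
    _ ≤ ∑ x, prob fun σ ↦ (B.map σ).edge x = e := prob_exists_le _ _
    _ = Fintype.card V ^ 2 / n.choose (κ + c) := by
      rw [sum_congr rfl fun x _ ↦ hedge x, sum_const, card_univ, Fintype.card_prod, nsmul_eq_mul,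
        mul_one_div, Nat.cast_mul, sq]

lemma exists_isTypical_map {ι : Type*} [Fintype ι] (B : BlockPartition n V κ c) (hk : κ + c = k)
    (hH : ∀ e ∈ H, #e = k) {δ : ℝ} (hε : ε < 1)
    (hprob : prob (fun σ ↦ ¬(B.map σ).IsTypical k H p δ) ≤ ε) (hη₀ : 0 ≤ η) (hη₁ : η ≤ 1)
    (hcover : Fintype.card ι * ((Fintype.card V : ℝ) ^ 2 / n.choose k) ≤ (1 - η) * (1 - ε) * M)
    (hcard : #H * Real.exp (-(η ^ 2 * M / 4)) < 1) :
    ∃ B' : ι → BlockPartition n V κ c, (∀ i, (B' i).IsTypical k H p δ) ∧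
      ∀ e ∈ H, #{i | ∃ x, (B' i).edge x = e} ≤ M := by
  obtain ⟨σ, hσ, hM⟩ := exists_forall_card_le (s := H)
    (A := fun e σ ↦ ∃ x, (B.map σ).edge x = e)
    (Good := fun σ ↦ (B.map σ).IsTypical k H p δ)
    (by rw [prob_eq_one_sub_prob_not]; exact sub_le_sub_left hprob 1) hε
    (fun e he ↦ by
      rw [← hk]; exact B.prob_exists_edge_map_eq_le ((hH e he).trans hk.symm)) hη₀ hη₁ hcover hcard
  exact ⟨fun i ↦ B.map (σ i), hσ, hM⟩

lemma exists_perfectMatchings {ι : Type*} [Fintype ι] [DecidableEq V] [Nonempty V]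
    {B : ι → BlockPartition n V κ c} (hκ : 0 < κ) (hc : 0 < c) (hk : κ + c = k)
    (hn : n = k * Fintype.card V) (hB : ∀ i, HasLargeCuts d L ((B i).graph H)) (hM₀ : 0 < M)
    (hM : ∀ e ∈ H, #{i | ∃ x, (B i).edge x = e} ≤ M)
    (hη₀ : 0 ≤ η) (hη₁ : η ≤ 1) (hd : 0 ≤ d)
    (hsmall : Fintype.card ι *
      (12 * (Fintype.card V * Real.exp (-(η ^ 2 * d / (64 * M))))) < 1)
    (hr : r ≤ (1 - η) * L / M) :
    ∃ 𝒮 : Finset (Finset (Finset (Fin n))), #𝒮 = Fintype.card ι * r ∧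
      (∀ C ∈ 𝒮, IsHypPerfectMatching n k H C) ∧
      (𝒮 : Set (Finset (Finset (Fin n)))).Pairwise Disjoint := by
  have : NeZero M := ⟨hM₀.ne'⟩
  have hcover (e) : #{i | ∃ x ∈ (B i).graph H, (B i).edge x = e} ≤ M := by
    by_cases he : e ∈ H
    · exact (card_le_card (monotone_filter_right _ fun i _ ⟨x, _, hx⟩ ↦ ⟨x, hx⟩)).trans (hM e he)
    · rw [filter_eq_empty_iff.mpr, card_empty]
      · exact Nat.zero_le M
      · exact fun i _ ⟨x, hx, hxe⟩ ↦ he (hxe ▸ mem_graph.mp hx)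
  obtain ⟨π, hπ, hne⟩ := exists_perms_of_hasLargeCuts hB (fun i ↦ (B i).edge_injective hκ hc)
    hcover hη₀ hη₁ hd hsmall hr
  let C (q : ι × Fin r) := (B q.1).matching (π q.1 q.2)
  have hdisj : Pairwise fun q q' ↦ Disjoint (C q) (C q') := fun q q' hq ↦ by
    refine disjoint_left.mpr fun e he he' ↦ ?_
    obtain ⟨a, rfl⟩ := mem_matching.mp he
    obtain ⟨a', h⟩ := mem_matching.mp he'
    exact hne hq a a' h.symm
  have hinj : C.Injective := fun q q' h ↦ by
    by_contra hq
    have hempty : Disjoint (C q) (C q') := hdisj hq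
    rw [← h, disjoint_self_iff_empty] at hempty
    exact (univ_nonempty.image _).ne_empty hempty
  refine ⟨univ.image C, ?_, ?_, ?_⟩
  · rw [card_image_of_injective _ hinj, card_univ, Fintype.card_prod, Fintype.card_fin]
  · intro _ hC
    obtain ⟨q, -, rfl⟩ := mem_image.mp hC
    exact (B q.1).isHypPerfectMatching_matching hκ hc hk hn (hπ q.1 q.2)
  · rw [coe_image, coe_univ, Set.image_univ]
    rintro _ ⟨q, rfl⟩ _ ⟨q', rfl⟩ h
    exact hdisj fun hq ↦ h (hq ▸ rfl)

end BlockPartition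

end RandomPartitions

section Parameters

/-- The range of parameters in which the construction works for `n = k * ν` vertices and regularity
parameter `ε = η ^ 3`. -/
structure IsLargeRegime (k ν : ℕ) (p η : ℝ) : Prop where
  two_le : 2 ≤ k
  ν_pos : 0 < ν
  p_pos : 0 < p
  p_le_one : p ≤ 1
  η_pos : 0 < η
  η_le : η ≤ 1 / 10
  le_log : 10 ^ 4 * (k : ℝ) ^ 4 ≤ Real.log (k * ν : ℕ)
  log_pow_le : Real.log (k * ν : ℕ) ^ 5 ≤ η ^ 3 * √(k * ν : ℕ) * p ^ 2

/-- The bound on the number of chosen block partitions in which a given edge of the hypergraph may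
occur. It is large enough for concentration of these numbers and for sampling a `1 / M` fraction of
the edges. -/
noncomputable def maxMultiplicity (k ν : ℕ) (η : ℝ) : ℕ :=
  ⌈4 * (k + 1) * Real.log (k * ν : ℕ) / η ^ 2⌉₊

/-- The number of block partitions in the construction. -/
noncomputable def numPartitions (k ν : ℕ) (η : ℝ) : ℕ :=
  ⌊(1 - η) * (1 - η ^ 3) * (maxMultiplicity k ν η * (k * ν).choose k / ν ^ 2)⌋₊

/-- The number of matchings taken from each block partition in the construction. -/
noncomputable def numMatchings (k ν : ℕ) (p η : ℝ) : ℕ :=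
  ⌊(1 - η) * (1 - 15 * η ^ 3) * (ν * p / maxMultiplicity k ν η)⌋₊

lemma mul_le_floor {η x : ℝ} (hη₀ : 0 < η) (hη₁ : η ≤ 1 / 10) (hx : 6 ≤ x * η) (a : ℝ) :
    (1 - η) * (1 - a - η / 3) * x ≤ ⌊(1 - η) * (1 - a) * x⌋₊ := by
  have hround : 1 ≤ (1 - η) * (x * η / 3) := by nlinarith
  linarith [Nat.lt_floor_add_one ((1 - η) * (1 - a) * x)]

lemma one_sub_four_mul_le {η ε : ℝ} (hη₀ : 0 < η) (hη₁ : η ≤ 1 / 10) (hε₀ : 0 ≤ ε)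
    (hε₁ : ε ≤ η / 100) :
    1 - 4 * η ≤ (1 - η) * (1 - ε - η / 3) * ((1 - η) * (1 - 15 * ε - η / 3)) := by
  have hleft : 1 - 4 / 3 * η - ε ≤ (1 - η) * (1 - ε - η / 3) := by nlinarith
  have hright : 1 - 4 / 3 * η - 15 * ε ≤ (1 - η) * (1 - 15 * ε - η / 3) := by nlinarith
  calc 1 - 4 * η ≤ (1 - 4 / 3 * η - ε) * (1 - 4 / 3 * η - 15 * ε) := by nlinarith
    _ ≤ (1 - η) * (1 - ε - η / 3) * ((1 - η) * (1 - 15 * ε - η / 3)) :=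
      mul_le_mul hleft hright (by linarith) (le_trans (by linarith) hleft)

namespace IsLargeRegime

variable {k ν : ℕ} {p η : ℝ}

lemma two_le_cast (h : IsLargeRegime k ν p η) : (2 : ℝ) ≤ k := by exact_mod_cast h.two_le

lemma one_le_cast (h : IsLargeRegime k ν p η) : (1 : ℝ) ≤ ν := by exact_mod_cast h.ν_pos

lemma one_le_cast_mul (h : IsLargeRegime k ν p η) : 1 ≤ ((k * ν : ℕ) : ℝ) :=
  Nat.one_le_cast.mpr (Nat.mul_pos (two_pos.trans_le h.two_le) h.ν_pos)

lemma cast_le_log (h : IsLargeRegime k ν p η) : (k : ℝ) ≤ Real.log (k * ν : ℕ) := by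
  have hk : (k : ℝ) ≤ k ^ 4 := le_self_pow₀ (by linarith [h.two_le_cast]) (by norm_num)
  linarith [h.le_log, hk, h.two_le_cast]

lemma one_le_log (h : IsLargeRegime k ν p η) : 1 ≤ Real.log (k * ν : ℕ) := by
  linarith [h.cast_le_log, h.two_le_cast]

lemma cast_pow_eq_exp (h : IsLargeRegime k ν p η) (a : ℕ) :
    ((k * ν : ℕ) : ℝ) ^ a = Real.exp (a * Real.log (k * ν : ℕ)) := by
  have hn : 0 < k * ν := Nat.mul_pos (by linarith [h.two_le]) h.ν_pos
  rw [Real.exp_nat_mul, Real.exp_log (Nat.cast_pos.mpr hn)]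

lemma log_pow_four_le (h : IsLargeRegime k ν p η) :
    Real.log (k * ν : ℕ) ^ 4 ≤ η ^ 3 * √ν * p ^ 2 := by
  have := h.η_pos
  have hlog := h.one_le_log
  have hk : √k ≤ Real.log (k * ν : ℕ) :=
    (Real.sqrt_le_self_iff.mpr (Or.inr (by linarith [h.two_le_cast]))).trans h.cast_le_log
  have hsqrt : √(k * ν : ℕ) ≤ Real.log (k * ν : ℕ) * √ν :=
    calc √(k * ν : ℕ) = √k * √ν := by rw [Nat.cast_mul, Real.sqrt_mul k.cast_nonneg]
      _ ≤ Real.log (k * ν : ℕ) * √ν := by gcongr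
  refine le_of_mul_le_mul_left ?_ (zero_lt_one.trans_le hlog)
  calc Real.log (k * ν : ℕ) * Real.log (k * ν : ℕ) ^ 4
    _ = Real.log (k * ν : ℕ) ^ 5 := by ring
    _ ≤ η ^ 3 * √(k * ν : ℕ) * p ^ 2 := h.log_pow_le
    _ ≤ η ^ 3 * (Real.log (k * ν : ℕ) * √ν) * p ^ 2 := by gcongr
    _ = Real.log (k * ν : ℕ) * (η ^ 3 * √ν * p ^ 2) := by ring

lemma mul_log_sq_le (h : IsLargeRegime k ν p η) :
    10 ^ 4 * (k : ℝ) ^ 4 * Real.log (k * ν : ℕ) ^ 2 ≤ η ^ 6 * (ν * p ^ 4) := by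
  have hlog := h.one_le_log
  calc 10 ^ 4 * (k : ℝ) ^ 4 * Real.log (k * ν : ℕ) ^ 2
    _ ≤ Real.log (k * ν : ℕ) * Real.log (k * ν : ℕ) ^ 2 := by
      have := h.le_log
      gcongr
    _ = Real.log (k * ν : ℕ) ^ 3 := by ring
    _ ≤ Real.log (k * ν : ℕ) ^ 8 := pow_le_pow_right₀ hlog (by norm_num)
    _ = (Real.log (k * ν : ℕ) ^ 4) ^ 2 := by ring
    _ ≤ (η ^ 3 * √ν * p ^ 2) ^ 2 := by
      have := h.log_pow_four_le
      gcongr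
    _ = η ^ 6 * (√ν ^ 2 * p ^ 4) := by ring
    _ = η ^ 6 * (ν * p ^ 4) := by rw [Real.sq_sqrt ν.cast_nonneg]

lemma cast_le_mul_sqrt (h : IsLargeRegime k ν p η) : (k : ℝ) ≤ η ^ 3 * √ν * p ^ 2 :=
  calc (k : ℝ) ≤ Real.log (k * ν : ℕ) := h.cast_le_log
    _ ≤ Real.log (k * ν : ℕ) ^ 4 := le_self_pow₀ h.one_le_log (by norm_num)
    _ ≤ η ^ 3 * √ν * p ^ 2 := h.log_pow_four_le

lemma sq_le_mul (h : IsLargeRegime k ν p η) : (k : ℝ) ^ 2 ≤ η ^ 3 * (k * ν : ℕ) := by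
  have := h.η_pos
  have hsqrt : (1 : ℝ) ≤ √ν := Real.one_le_sqrt.mpr h.one_le_cast
  have hk : (k : ℝ) ≤ η ^ 3 * ν :=
    calc (k : ℝ) ≤ η ^ 3 * √ν * p ^ 2 := h.cast_le_mul_sqrt
      _ ≤ η ^ 3 * √ν * √ν := by
        gcongr
        exact (pow_le_one₀ h.p_pos.le h.p_le_one).trans hsqrt
      _ = η ^ 3 * ν := by rw [mul_assoc, Real.mul_self_sqrt ν.cast_nonneg]
  calc (k : ℝ) ^ 2 = k * k := sq _
    _ ≤ k * (η ^ 3 * ν) := by gcongr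
    _ = η ^ 3 * (k * ν : ℕ) := by
      push_cast
      ring

lemma sqrt_le (h : IsLargeRegime k ν p η) : √ν ≤ 3 * η ^ 3 * (ν * p) := by
  have := h.η_pos
  have := h.p_pos
  have hone : 1 ≤ η ^ 3 * √ν * p ^ 2 := by linarith [h.cast_le_mul_sqrt, h.two_le_cast]
  calc √ν = √ν * 1 := (mul_one _).symm
    _ ≤ √ν * (η ^ 3 * √ν * p ^ 2) := by gcongr
    _ = η ^ 3 * (√ν * √ν) * p ^ 2 := by ring
    _ = η ^ 3 * ν * p ^ 2 := by rw [Real.mul_self_sqrt ν.cast_nonneg]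
    _ ≤ 3 * η ^ 3 * ν * p := by
      gcongr
      · linarith [show 0 < η ^ 3 by positivity]
      · exact pow_le_of_le_one h.p_pos.le h.p_le_one two_ne_zero
    _ = 3 * η ^ 3 * (ν * p) := by ring

lemma mul_log_le_sq_div (h : IsLargeRegime k ν p η) :
    (2 * k + 2) * Real.log (k * ν : ℕ) ≤ (η ^ 3 * (ν * p ^ 2)) ^ 2 / (32 * (k * ν : ℕ)) := by
  have hk := h.two_le_cast
  have hlog := h.one_le_log
  have := h.one_le_cast_mul
  rw [le_div_iff₀ (by positivity)]
  calc (2 * k + 2) * Real.log (k * ν : ℕ) * (32 * (k * ν : ℕ))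
    _ = ν * (((2 * k + 2) * (32 * k)) * Real.log (k * ν : ℕ)) := by
      push_cast
      ring
    _ ≤ ν * (10 ^ 4 * (k : ℝ) ^ 4 * Real.log (k * ν : ℕ) ^ 2) := by
      have hk4 : (k : ℝ) ^ 2 ≤ k ^ 4 := pow_le_pow_right₀ (by linarith) (by norm_num)
      have : (2 * k + 2) * (32 * k) ≤ 10 ^ 4 * (k : ℝ) ^ 4 := by nlinarith
      have := le_self_pow₀ hlog two_ne_zero
      gcongr
    _ ≤ ν * (η ^ 6 * (ν * p ^ 4)) := by
      have := h.mul_log_sq_le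
      gcongr
    _ = (η ^ 3 * (ν * p ^ 2)) ^ 2 := by ring

lemma mul_pow_mul_exp_le (h : IsLargeRegime k ν p η) :
    4 * ((k * ν : ℕ) : ℝ) ^ (2 * k) *
      Real.exp (-((η ^ 3 * (ν * p ^ 2)) ^ 2 / (32 * (k * ν : ℕ)))) ≤ η ^ 3 := by
  have hn := h.one_le_cast_mul
  calc 4 * ((k * ν : ℕ) : ℝ) ^ (2 * k) *
        Real.exp (-((η ^ 3 * (ν * p ^ 2)) ^ 2 / (32 * (k * ν : ℕ))))
    _ ≤ 4 * ((k * ν : ℕ) : ℝ) ^ (2 * k) * Real.exp (-((2 * k + 2) * Real.log (k * ν : ℕ))) := by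
      have := h.mul_log_le_sq_div
      gcongr
    _ = 4 / ((k * ν : ℕ) : ℝ) ^ 2 := by
      rw [h.cast_pow_eq_exp, h.cast_pow_eq_exp, mul_assoc, ← Real.exp_add, div_eq_mul_inv,
        ← Real.exp_neg]
      congr 2
      push_cast
      ring
    _ ≤ η ^ 3 := by
      rw [div_le_iff₀ (by positivity)]
      nlinarith [h.sq_le_mul, h.two_le_cast]

lemma mul_log_le_maxMultiplicity (h : IsLargeRegime k ν p η) :
    4 * (k + 1) * Real.log (k * ν : ℕ) ≤ maxMultiplicity k ν η * η ^ 2 :=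
  (div_le_iff₀ (pow_pos h.η_pos 2)).mp (Nat.le_ceil _)

lemma maxMultiplicity_pos (h : IsLargeRegime k ν p η) : 0 < maxMultiplicity k ν η := by
  have := h.one_le_log
  have := h.η_pos
  exact Nat.ceil_pos.mpr (by positivity)

lemma maxMultiplicity_le (h : IsLargeRegime k ν p η) :
    maxMultiplicity k ν η * η ^ 2 ≤ 5 * (k + 1) * Real.log (k * ν : ℕ) := by
  have hη := h.η_pos
  have hlog := h.one_le_log
  have hM : (maxMultiplicity k ν η : ℝ) ≤ 4 * (k + 1) * Real.log (k * ν : ℕ) / η ^ 2 + 1 :=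
    (Nat.ceil_lt_add_one (by positivity)).le
  calc maxMultiplicity k ν η * η ^ 2
    _ ≤ (4 * (k + 1) * Real.log (k * ν : ℕ) / η ^ 2 + 1) * η ^ 2 := by gcongr
    _ = 4 * (k + 1) * Real.log (k * ν : ℕ) + η ^ 2 := by field_simp
    _ ≤ 5 * (k + 1) * Real.log (k * ν : ℕ) := by nlinarith [h.η_le, h.two_le_cast]

lemma mul_log_le_div_maxMultiplicity (h : IsLargeRegime k ν p η) :
    (k + 4) * Real.log (k * ν : ℕ) ≤ η ^ 2 * (ν * p) / (64 * maxMultiplicity k ν η) := by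
  have hη := h.η_pos
  have hp := h.p_pos
  have hk := h.two_le_cast
  have hlog := h.one_le_log
  have hM : (0 : ℝ) < maxMultiplicity k ν η := Nat.cast_pos.mpr h.maxMultiplicity_pos
  rw [le_div_iff₀ (by positivity)]
  refine le_of_mul_le_mul_left ?_ (show 0 < η ^ 2 by positivity)
  calc η ^ 2 * ((k + 4) * Real.log (k * ν : ℕ) * (64 * maxMultiplicity k ν η))
    _ = (k + 4) * Real.log (k * ν : ℕ) * (64 * (maxMultiplicity k ν η * η ^ 2)) := by ring
    _ ≤ (k + 4) * Real.log (k * ν : ℕ) * (64 * (5 * (k + 1) * Real.log (k * ν : ℕ))) := by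
      have := h.maxMultiplicity_le
      gcongr
    _ = 320 * (k + 4) * (k + 1) * Real.log (k * ν : ℕ) ^ 2 := by ring
    _ ≤ 10 ^ 4 * (k : ℝ) ^ 4 * Real.log (k * ν : ℕ) ^ 2 := by
      have hk4 : (k : ℝ) ^ 2 ≤ k ^ 4 := pow_le_pow_right₀ (by linarith) (by norm_num)
      have : 320 * (k + 4) * (k + 1) ≤ 10 ^ 4 * (k : ℝ) ^ 4 := by nlinarith
      gcongr
    _ ≤ η ^ 6 * (ν * p ^ 4) := h.mul_log_sq_le
    _ ≤ η ^ 4 * (ν * p) := by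
      have := pow_le_pow_of_le_one hη.le (by linarith [h.η_le]) (show 4 ≤ 6 by norm_num)
      have := pow_le_of_le_one hp.le h.p_le_one four_ne_zero
      gcongr
    _ = η ^ 2 * (η ^ 2 * (ν * p)) := by ring

lemma six_mul_maxMultiplicity_le (h : IsLargeRegime k ν p η) :
    6 * maxMultiplicity k ν η ≤ η * (ν * p) := by
  have hM : (0 : ℝ) < maxMultiplicity k ν η := Nat.cast_pos.mpr h.maxMultiplicity_pos
  have hone : 1 ≤ η ^ 2 * (ν * p) / (64 * maxMultiplicity k ν η) :=
    le_trans (by nlinarith [h.one_le_log, h.two_le_cast]) h.mul_log_le_div_maxMultiplicity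
  rw [le_div_iff₀ (by positivity), one_mul] at hone
  have : 0 < ν * p := mul_pos (by linarith [h.one_le_cast]) h.p_pos
  have : η ^ 2 * (ν * p) ≤ η * (ν * p) := by
    gcongr
    exact pow_le_of_le_one h.η_pos.le (by linarith [h.η_le]) two_ne_zero
  linarith

lemma six_le_maxMultiplicity_mul (h : IsLargeRegime k ν p η) :
    6 ≤ maxMultiplicity k ν η * η := by
  have hη : η ^ 2 ≤ η := pow_le_of_le_one h.η_pos.le (by linarith [h.η_le]) two_ne_zero
  calc (6 : ℝ) ≤ 4 * (k + 1) * Real.log (k * ν : ℕ) := by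
        nlinarith [h.one_le_log, h.two_le_cast]
    _ ≤ maxMultiplicity k ν η * η ^ 2 := h.mul_log_le_maxMultiplicity
    _ ≤ maxMultiplicity k ν η * η := by gcongr

lemma choose_mul_exp_lt_one (h : IsLargeRegime k ν p η) :
    (k * ν).choose k * Real.exp (-(η ^ 2 * maxMultiplicity k ν η / 4)) < 1 :=
  calc (k * ν).choose k * Real.exp (-(η ^ 2 * maxMultiplicity k ν η / 4))
    _ ≤ ((k * ν : ℕ) : ℝ) ^ k * Real.exp (-((k + 1) * Real.log (k * ν : ℕ))) := by
      have := h.mul_log_le_maxMultiplicity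
      gcongr
      · exact_mod_cast Nat.choose_le_pow (k * ν) k
      · linarith
    _ = Real.exp (-Real.log (k * ν : ℕ)) := by
      rw [h.cast_pow_eq_exp, ← Real.exp_add]
      ring_nf
    _ < 1 := Real.exp_lt_one_iff.mpr (by linarith [h.one_le_log])

lemma maxMultiplicity_le_mul (h : IsLargeRegime k ν p η) :
    (maxMultiplicity k ν η : ℝ) ≤ (k * ν : ℕ) := by
  have := h.p_pos
  calc (maxMultiplicity k ν η : ℝ) ≤ 6 * maxMultiplicity k ν η := by
        linarith [(maxMultiplicity k ν η).cast_nonneg (α := ℝ)]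
    _ ≤ η * (ν * p) := h.six_mul_maxMultiplicity_le
    _ ≤ 1 * (ν * 1) := by
      gcongr
      · linarith [h.η_le]
      · exact h.p_le_one
    _ ≤ k * ν := by
      rw [mul_one]
      gcongr
      linarith [h.two_le_cast]
    _ = (k * ν : ℕ) := by push_cast; rfl

lemma mul_exp_lt_one (h : IsLargeRegime k ν p η) {R : ℝ}
    (hR : R * ν ≤ maxMultiplicity k ν η * (k * ν).choose k) :
    R * (12 * (ν * Real.exp (-(η ^ 2 * (ν * p) / (64 * maxMultiplicity k ν η))))) < 1 := by
  have hlog : 12 ≤ Real.log (k * ν : ℕ) := by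
    nlinarith [h.le_log, one_le_pow₀ (n := 4) (show (1 : ℝ) ≤ k by linarith [h.two_le_cast])]
  calc R * (12 * (ν * Real.exp (-(η ^ 2 * (ν * p) / (64 * maxMultiplicity k ν η)))))
    _ = 12 * (R * ν) * Real.exp (-(η ^ 2 * (ν * p) / (64 * maxMultiplicity k ν η))) := by ring
    _ ≤ 12 * ((k * ν : ℕ) * ((k * ν : ℕ) : ℝ) ^ k) *
        Real.exp (-((k + 4) * Real.log (k * ν : ℕ))) := by
      have := h.mul_log_le_div_maxMultiplicity
      have := h.maxMultiplicity_le_mul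
      have : ((k * ν).choose k : ℝ) ≤ ((k * ν : ℕ) : ℝ) ^ k := by
        exact_mod_cast Nat.choose_le_pow (k * ν) k
      have := hR.trans (by gcongr : _ ≤ ((k * ν : ℕ) : ℝ) * ((k * ν : ℕ) : ℝ) ^ k)
      gcongr
    _ = 12 * Real.exp (-(3 * Real.log (k * ν : ℕ))) := by
      rw [← pow_succ', h.cast_pow_eq_exp, mul_assoc, ← Real.exp_add]
      push_cast
      ring_nf
    _ < 1 := by
      rw [Real.exp_neg, ← div_eq_mul_inv, div_lt_one (Real.exp_pos _)]
      linarith [Real.add_one_le_exp (3 * Real.log (k * ν : ℕ))]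

lemma pow_three_le (h : IsLargeRegime k ν p η) : η ^ 3 ≤ η / 100 := by
  nlinarith [h.η_pos, h.η_le, mul_self_le_mul_self h.η_pos.le h.η_le]

lemma le_choose_div_sq (h : IsLargeRegime k ν p η) : 1 ≤ ((k * ν).choose k : ℝ) / ν ^ 2 := by
  have := h.one_le_cast
  rw [one_le_div (by positivity)]
  exact_mod_cast sq_le_choose_mul h.two_le ν

lemma numPartitions_mul_le (h : IsLargeRegime k ν p η) :
    numPartitions k ν η * ((ν : ℝ) ^ 2 / (k * ν).choose k) ≤
      (1 - η) * (1 - η ^ 3) * maxMultiplicity k ν η := by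
  have := h.one_le_cast
  have hC : (0 : ℝ) < (k * ν).choose k :=
    Nat.cast_pos.mpr (Nat.choose_pos (Nat.le_mul_of_pos_right k h.ν_pos))
  have hη : 0 ≤ 1 - η := by linarith [h.η_le]
  have hη₃ : 0 ≤ 1 - η ^ 3 := by linarith [h.pow_three_le, h.η_le]
  calc numPartitions k ν η * ((ν : ℝ) ^ 2 / (k * ν).choose k)
    _ ≤ (1 - η) * (1 - η ^ 3) * (maxMultiplicity k ν η * (k * ν).choose k / ν ^ 2) *
        ((ν : ℝ) ^ 2 / (k * ν).choose k) := by
      gcongr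
      exact Nat.floor_le (by positivity)
    _ = (1 - η) * (1 - η ^ 3) * maxMultiplicity k ν η := by field_simp

lemma numPartitions_mul_cast_le (h : IsLargeRegime k ν p η) :
    numPartitions k ν η * (ν : ℝ) ≤ maxMultiplicity k ν η * (k * ν).choose k := by
  have hν := h.one_le_cast
  have hη₁ := h.η_le
  have hC : (0 : ℝ) < (k * ν).choose k :=
    Nat.cast_pos.mpr (Nat.choose_pos (Nat.le_mul_of_pos_right k h.ν_pos))
  calc numPartitions k ν η * (ν : ℝ)
    _ ≤ numPartitions k ν η * (ν : ℝ) ^ 2 := by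
      gcongr
      exact le_self_pow₀ hν two_ne_zero
    _ = numPartitions k ν η * ((ν : ℝ) ^ 2 / (k * ν).choose k) * (k * ν).choose k := by
      field_simp
    _ ≤ maxMultiplicity k ν η * (k * ν).choose k := by
      gcongr
      refine h.numPartitions_mul_le.trans (mul_le_of_le_one_left (Nat.cast_nonneg _) ?_)
      nlinarith [pow_pos h.η_pos 3, h.pow_three_le]

lemma numMatchings_le (h : IsLargeRegime k ν p η) :
    numMatchings k ν p η ≤
      (1 - η) * ((1 - 5 * (3 * η ^ 3)) * (ν * p)) / maxMultiplicity k ν η := by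
  have hp := h.p_pos
  have hη : 0 ≤ 1 - η := by linarith [h.η_le]
  have hη₃ : 0 ≤ 1 - 15 * η ^ 3 := by linarith [h.pow_three_le, h.η_le]
  refine (Nat.floor_le (by positivity)).trans_eq ?_
  ring

lemma le_numPartitions (h : IsLargeRegime k ν p η) :
    (1 - η) * (1 - η ^ 3 - η / 3) * (maxMultiplicity k ν η * (k * ν).choose k / ν ^ 2) ≤
      numPartitions k ν η := by
  refine mul_le_floor h.η_pos h.η_le ?_ _
  have hη := h.η_pos
  calc 6 ≤ maxMultiplicity k ν η * η := h.six_le_maxMultiplicity_mul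
    _ = maxMultiplicity k ν η * 1 * η := by ring
    _ ≤ maxMultiplicity k ν η * ((k * ν).choose k / ν ^ 2) * η := by
      have := h.le_choose_div_sq
      gcongr
    _ = maxMultiplicity k ν η * (k * ν).choose k / ν ^ 2 * η := by ring

lemma le_numMatchings (h : IsLargeRegime k ν p η) :
    (1 - η) * (1 - 15 * η ^ 3 - η / 3) * (ν * p / maxMultiplicity k ν η) ≤
      numMatchings k ν p η := by
  refine mul_le_floor h.η_pos h.η_le ?_ _
  rw [div_mul_eq_mul_div, le_div_iff₀ (Nat.cast_pos.mpr h.maxMultiplicity_pos), mul_comm _ η]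
  exact h.six_mul_maxMultiplicity_le

lemma le_numPartitions_mul_numMatchings (h : IsLargeRegime k ν p η) :
    (1 - 4 * η) * (p * (k * ν).choose k) / ν ≤ numPartitions k ν η * numMatchings k ν p η := by
  have hν := h.one_le_cast
  have hp := h.p_pos
  have hη := h.η_pos
  have hη₁ := h.η_le
  have hη₃ := h.pow_three_le
  have hM : (0 : ℝ) < maxMultiplicity k ν η := Nat.cast_pos.mpr h.maxMultiplicity_pos
  have hconst : 1 - 4 * η ≤
      (1 - η) * (1 - η ^ 3 - η / 3) * ((1 - η) * (1 - 15 * η ^ 3 - η / 3)) :=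
    one_sub_four_mul_le hη hη₁ (pow_pos hη 3).le hη₃
  calc (1 - 4 * η) * (p * (k * ν).choose k) / ν
    _ = (1 - 4 * η) * (p * (k * ν).choose k / ν) := mul_div_assoc _ _ _
    _ ≤ (1 - η) * (1 - η ^ 3 - η / 3) * ((1 - η) * (1 - 15 * η ^ 3 - η / 3)) *
        (p * (k * ν).choose k / ν) := by gcongr
    _ = (1 - η) * (1 - η ^ 3 - η / 3) * (maxMultiplicity k ν η * (k * ν).choose k / ν ^ 2) *
        ((1 - η) * (1 - 15 * η ^ 3 - η / 3) * (ν * p / maxMultiplicity k ν η)) := by field_simp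
    _ ≤ numPartitions k ν η * numMatchings k ν p η := by
      refine mul_le_mul h.le_numPartitions h.le_numMatchings ?_ (Nat.cast_nonneg _)
      have : 0 ≤ 1 - η := by linarith
      have : 0 ≤ 1 - 15 * η ^ 3 - η / 3 := by linarith
      positivity

end IsLargeRegime

end Parameters

section Asymptotics

variable {k κ c : ℕ}

lemma exists_forall_isTypical {ν : ℕ} {p η : ℝ} {H : Finset (Finset (Fin (k * ν)))}
    (hk : κ + c = k) (h : IsLargeRegime k ν p η) (hH : ∀ e ∈ H, #e = k)
    (hleft : HasRegularNbhds k κ c H p (η ^ 3)) (hright : HasRegularNbhds k c κ H p (η ^ 3)) :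
    ∃ B : Fin (numPartitions k ν η) → BlockPartition (k * ν) (Fin ν) κ c,
      (∀ i, (B i).IsTypical k H p (3 * η ^ 3)) ∧
      ∀ e ∈ H, #{i | ∃ x, (B i).edge x = e} ≤ maxMultiplicity k ν η := by
  have hη₁ := h.η_le
  have hη₃ := h.pow_three_le
  obtain ⟨B₀⟩ : Nonempty (BlockPartition (k * ν) (Fin ν) κ c) := hk ▸ nonempty_blockPartition κ c ν
  have hprob : prob (fun σ ↦ ¬(B₀.map σ).IsTypical k H p (3 * η ^ 3)) ≤ η ^ 3 := by
    refine (B₀.prob_not_isTypical_map_le hk (Nat.le_mul_of_pos_right k h.ν_pos)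
      (Nat.cast_pos.mp (zero_lt_one.trans_le h.one_le_cast_mul)) hleft hright h.p_pos.le h.p_le_one
      (pow_pos h.η_pos 3).le (by linarith) h.sq_le_mul).trans ?_
    simpa only [Fintype.card_fin] using h.mul_pow_mul_exp_le
  have hcard : #H * Real.exp (-(η ^ 2 * maxMultiplicity k ν η / 4)) < 1 := by
    refine lt_of_le_of_lt ?_ h.choose_mul_exp_lt_one
    gcongr
    have hsized : (H : Set (Finset (Fin (k * ν)))).Sized k := fun e he ↦ hH e he
    simpa only [Fintype.card_fin] using hsized.card_le
  exact B₀.exists_isTypical_map hk hH (by linarith) hprob h.η_pos.le (by linarith)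
    (by simpa only [Fintype.card_fin] using h.numPartitions_mul_le) hcard

theorem exists_perfectMatchings_of_isLargeRegime {ν : ℕ} {p η : ℝ}
    {H : Finset (Finset (Fin (k * ν)))} (hκ : 0 < κ) (hc : 0 < c) (hk : κ + c = k)
    (h : IsLargeRegime k ν p η) (hH : ∀ e ∈ H, #e = k) (hm : (#H : ℝ) = p * (k * ν).choose k)
    (hleft : HasRegularNbhds k κ c H p (η ^ 3)) (hright : HasRegularNbhds k c κ H p (η ^ 3)) :
    ∃ 𝒮 : Finset (Finset (Finset (Fin (k * ν)))), (1 - 4 * η) * #H / ν ≤ #𝒮 ∧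
      (∀ C ∈ 𝒮, IsHypPerfectMatching (k * ν) k H C) ∧
      (𝒮 : Set (Finset (Finset (Fin (k * ν))))).Pairwise Disjoint := by
  have hη₁ := h.η_le
  have hη₃ := h.pow_three_le
  have hη₃' : 0 < η ^ 3 := pow_pos h.η_pos 3
  have : NeZero ν := ⟨h.ν_pos.ne'⟩
  obtain ⟨B, htypical, hcover⟩ := exists_forall_isTypical hk h hH hleft hright
  have hcuts (i) : HasLargeCuts (ν * p) ((1 - 5 * (3 * η ^ 3)) * (ν * p)) ((B i).graph H) := by
    simpa only [Fintype.card_fin] using ((htypical i).isPseudorandom_graph hk).hasLargeCuts h.p_pos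
      (by positivity) (by linarith) (by simpa only [Fintype.card_fin] using h.sqrt_le)
  obtain ⟨𝒮, hcard, hmatching, hdisjoint⟩ := BlockPartition.exists_perfectMatchings
    (r := numMatchings k ν p η) hκ hc hk (by rw [Fintype.card_fin]) hcuts h.maxMultiplicity_pos
    hcover h.η_pos.le (by linarith) (mul_nonneg ν.cast_nonneg h.p_pos.le)
    (by simpa only [Fintype.card_fin] using h.mul_exp_lt_one h.numPartitions_mul_cast_le)
    h.numMatchings_le
  refine ⟨𝒮, ?_, hmatching, hdisjoint⟩
  rw [hm, hcard, Fintype.card_fin, Nat.cast_mul]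
  exact h.le_numPartitions_mul_numMatchings

lemma eventually_isLargeRegime {p ε : ℕ → ℝ} (hk : 2 ≤ k) (hp₀ : ∀ j, 0 ≤ p j)
    (hp₁ : ∀ j, p j ≤ 1) (hε : Tendsto ε atTop (nhds 0))
    (hlim : Tendsto (fun j ↦ ε j * √(k * j : ℕ) * p j ^ 2 / Real.log (k * j : ℕ) ^ 5)
      atTop atTop) :
    ∀ᶠ j in atTop, 0 < ε j ∧ IsLargeRegime k j (p j) (ε j ^ (1 / 3 : ℝ)) := by
  have hlog : Tendsto (fun j ↦ Real.log (k * j : ℕ)) atTop atTop :=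
    Real.tendsto_log_atTop.comp <| tendsto_natCast_atTop_atTop.comp <|
      tendsto_id.const_mul_atTop' (by omega : 0 < k)
  filter_upwards [hε.eventually_le_const (show (0 : ℝ) < 1 / 1000 by norm_num),
    hlim.eventually_ge_atTop 1, hlog.eventually_ge_atTop (10 ^ 4 * (k : ℝ) ^ 4),
    eventually_gt_atTop 0] with j hε₁ hone hlog hj
  have hlog₀ : 0 < Real.log (k * j : ℕ) := lt_of_lt_of_le (by positivity) hlog
  have hmain : Real.log (k * j : ℕ) ^ 5 ≤ ε j * √(k * j : ℕ) * p j ^ 2 := by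
    rwa [le_div_iff₀ (by positivity), one_mul] at hone
  have hpos : 0 < ε j * (√(k * j : ℕ) * p j ^ 2) :=
    mul_assoc (ε j) _ _ ▸ (pow_pos hlog₀ 5).trans_le hmain
  have hε₀ : 0 < ε j := pos_of_mul_pos_left hpos (by positivity)
  have hp : 0 < p j := (hp₀ j).lt_of_ne' fun hp ↦ by simp [hp] at hpos
  have hcube : (ε j ^ (1 / 3 : ℝ)) ^ 3 = ε j := by
    simpa only [one_div, Nat.cast_ofNat] using Real.rpow_inv_natCast_pow hε₀.le three_ne_zero
  refine ⟨hε₀, hk, hj, hp, hp₁ j, Real.rpow_pos_of_pos hε₀ _, ?_, hlog, by rwa [hcube]⟩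
  exact le_of_pow_le_pow_left₀ three_ne_zero (by norm_num) (by rw [hcube]; linarith)

lemma HasRegularNbhds.of_ceil_floor {n : ℕ} {H : Finset (Finset (Fin n))} {p ε : ℝ} (hε : 0 ≤ ε)
    (hdegree : ∀ S : Finset (Fin n), #S = κ →
      ⌈(1 - ε) * (n - κ).choose c * p⌉₊ ≤ hDeg n k H S)
    (hcodegree : ∀ S₁ S₂ : Finset (Fin n), #S₁ = κ → #S₂ = κ → Disjoint S₁ S₂ →
      #(hNbhd n k H S₁ ∩ hNbhd n k H S₂) ≤ ⌊(1 + ε) * (n - 2 * κ).choose c * p ^ 2⌋₊) :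
    HasRegularNbhds k κ c H p ε where
  degree S hS := Nat.ceil_le.mp (hdegree S hS)
  codegree S₁ S₂ h₁ h₂ hd :=
    (Nat.cast_le.mpr (hcodegree S₁ S₂ h₁ h₂ hd)).trans (Nat.floor_le (by positivity))

end Asymptotics

end HypergraphPacking

open HypergraphPacking in
theorem stmt_4_general {k κ c : ℕ} (hκ : 0 < κ) (hc : 0 < c) (hk : κ + c = k)
    (H : ∀ j : ℕ, Finset (Finset (Fin (k * j)))) (huniform : ∀ j, ∀ e ∈ H j, #e = k)
    (p : ℕ → ℝ) (hp : ∀ j, p j = #(H j) / (k * j).choose k)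
    (ε : ℕ → ℝ) (hε0 : Tendsto ε atTop (nhds 0))
    (hεlim : Tendsto (fun j ↦ ε j * √(k * j : ℕ) * p j ^ 2 / Real.log (k * j : ℕ) ^ 5)
      atTop atTop)
    (hdegree_left : ∀ j, ∀ S : Finset (Fin (k * j)), #S = κ →
      ⌈(1 - ε j) * (k * j - κ).choose c * p j⌉₊ ≤ hDeg (k * j) k (H j) S)
    (hdegree_right : ∀ j, ∀ S : Finset (Fin (k * j)), #S = c →
      ⌈(1 - ε j) * (k * j - c).choose κ * p j⌉₊ ≤ hDeg (k * j) k (H j) S)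
    (hcodegree_left : ∀ j, ∀ S₁ S₂ : Finset (Fin (k * j)), #S₁ = κ → #S₂ = κ → Disjoint S₁ S₂ →
      #(hNbhd (k * j) k (H j) S₁ ∩ hNbhd (k * j) k (H j) S₂) ≤
        ⌊(1 + ε j) * (k * j - 2 * κ).choose c * p j ^ 2⌋₊)
    (hcodegree_right : ∀ j, ∀ S₁ S₂ : Finset (Fin (k * j)), #S₁ = c → #S₂ = c → Disjoint S₁ S₂ →
      #(hNbhd (k * j) k (H j) S₁ ∩ hNbhd (k * j) k (H j) S₂) ≤
        ⌊(1 + ε j) * (k * j - 2 * c).choose κ * p j ^ 2⌋₊) :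
    ∀ᶠ j in atTop, ∃ 𝒮 : Finset (Finset (Finset (Fin (k * j)))),
      (1 - 4 * ε j ^ (1 / 3 : ℝ)) * #(H j) / j ≤ #𝒮 ∧
      (∀ C ∈ 𝒮, IsHypPerfectMatching (k * j) k (H j) C) ∧
      (𝒮 : Set (Finset (Finset (Fin (k * j))))).Pairwise Disjoint := by
  have hp₀ (j) : 0 ≤ p j := by rw [hp]; positivity
  have hp₁ (j) : p j ≤ 1 := by
    have hsized : (H j : Set (Finset (Fin (k * j)))).Sized k := fun e he ↦ huniform j e he
    rw [hp]
    refine div_le_one_of_le₀ (Nat.cast_le.mpr ?_) (Nat.cast_nonneg _)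
    simpa only [Fintype.card_fin] using hsized.card_le
  filter_upwards [eventually_isLargeRegime (by omega) hp₀ hp₁ hε0 hεlim] with j ⟨hε, h⟩
  have hcube : (ε j ^ (1 / 3 : ℝ)) ^ 3 = ε j := by
    simpa only [one_div, Nat.cast_ofNat] using Real.rpow_inv_natCast_pow hε.le three_ne_zero
  have hm : (#(H j) : ℝ) = p j * (k * j).choose k := by
    have hC : 0 < (k * j).choose k := Nat.choose_pos (Nat.le_mul_of_pos_right k h.ν_pos)
    rw [hp, div_mul_cancel₀ _ (Nat.cast_ne_zero.mpr hC.ne')]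
  refine exists_perfectMatchings_of_isLargeRegime hκ hc hk h (huniform j) hm ?_ ?_ <;> rw [hcube]
  · exact .of_ceil_floor hε.le (hdegree_left j) (hcodegree_left j)
  · exact .of_ceil_floor hε.le (hdegree_right j) (hcodegree_right j)

/-- Theorem 5 of the paper: let `k ≥ 2` divide `n` (we write `n = k j`),
`k_X = ⌊k/2⌋`, `k_Y = ⌈k/2⌉` (`= k - k_X`), and let `H` be a `k`-uniform hypergraph on
`[n]` with `m` edges and density `p = m/C(n,k)` satisfying `R_a, …, R_f` with `ε → 0`,
`ε n^{1/2} p²/log⁵ n → ∞`.  Then (for all large `n`) `H` contains at least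
`(1 - 4ε^{1/3}) m/ν_k` pairwise edge-disjoint perfect matchings, `ν_k = n/k = j`. -/
theorem stmt_4 (k : ℕ) (hk : 2 ≤ k)
    (H : ∀ j : ℕ, Finset (Finset (Fin (k * j))))
    (huniform : ∀ j, ∀ e ∈ H j, e.card = k)
    (p : ℕ → ℝ) (hp : ∀ j, p j = ((H j).card : ℝ) / (((k * j).choose k : ℕ) : ℝ))
    (ε : ℕ → ℝ) (hε0 : Tendsto ε atTop (nhds 0))
    (hεlim : Tendsto
      (fun j => ε j * Real.sqrt ((k * j : ℕ) : ℝ) * (p j) ^ 2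
                  / (Real.log ((k * j : ℕ) : ℝ)) ^ 5) atTop atTop)
    (hRa : ∀ j, ∀ S : Finset (Fin (k * j)), S.card = k / 2 →
      Nat.ceil ((1 - ε j) * (((k * j - k / 2).choose (k - k / 2) : ℕ) : ℝ) * p j)
        ≤ hDeg (k * j) k (H j) S)
    (hRb : ∀ j, ∀ S : Finset (Fin (k * j)), S.card = k - k / 2 →
      Nat.ceil ((1 - ε j) * (((k * j - (k - k / 2)).choose (k / 2) : ℕ) : ℝ) * p j)
        ≤ hDeg (k * j) k (H j) S)
    (hRc : ∀ j, ∀ S : Finset (Fin (k * j)), S.card = k / 2 + 1 →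
      (hDeg (k * j) k (H j) S : ℝ)
        ≤ (1 + ε j) * (((k * j - (k / 2 + 1)).choose (k - k / 2 - 1) : ℕ) : ℝ) * p j)
    (hRd : ∀ j, ∀ S : Finset (Fin (k * j)), S.card = (k - k / 2) + 1 →
      (hDeg (k * j) k (H j) S : ℝ)
        ≤ (1 + ε j) * (((k * j - (k - k / 2 + 1)).choose (k / 2 - 1) : ℕ) : ℝ) * p j)
    (hRe : ∀ j, ∀ S₁ S₂ : Finset (Fin (k * j)),
      S₁.card = k / 2 → S₂.card = k / 2 → Disjoint S₁ S₂ →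
      (hNbhd (k * j) k (H j) S₁ ∩ hNbhd (k * j) k (H j) S₂).card
        ≤ Nat.floor ((1 + ε j) * (((k * j - 2 * (k / 2)).choose (k - k / 2) : ℕ) : ℝ) * (p j) ^ 2))
    (hRf : ∀ j, ∀ S₁ S₂ : Finset (Fin (k * j)),
      S₁.card = k - k / 2 → S₂.card = k - k / 2 → Disjoint S₁ S₂ →
      (hNbhd (k * j) k (H j) S₁ ∩ hNbhd (k * j) k (H j) S₂).card
        ≤ Nat.floor ((1 + ε j) * (((k * j - 2 * (k - k / 2)).choose (k / 2) : ℕ) : ℝ) * (p j) ^ 2)) :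
    ∀ᶠ j in atTop,
      ∃ 𝒮 : Finset (Finset (Finset (Fin (k * j)))),
        (1 - 4 * (ε j) ^ ((1 : ℝ) / 3)) * ((H j).card : ℝ) / (j : ℝ) ≤ (𝒮.card : ℝ) ∧
        (∀ C ∈ 𝒮, IsHypPerfectMatching (k * j) k (H j) C) ∧
        (𝒮 : Set (Finset (Finset (Fin (k * j))))).Pairwise Disjoint :=
  stmt_4_general (by omega) (by omega) (by omega) H huniform p hp ε hε0 hεlim hRa hRb hRe hRf
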